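/- Let q > 2 and let u, w : ℝ/ℤ → ℝⁿ be C¹ curves with finite W^{1-1/q,q} seminorms of their derivatives, where u is embedded and regular with bil(u) < ∞. Then the function t ↦ TP(u + t w) is differentiable at t = 0, its derivative equals δTP(u)[w] = M(u; u, w) + M(u; w, u) − 2 A(u; u, w), and there is a constant C > 0 depending only on n and q such that |δTP(u)[w]| ≤ C · (bil u)^{2q+2} · ‖u'‖_{L^∞}^{q+1} · ‖u'‖_{W^{1-1/q,q}}^q · ‖w'‖_{W^{1-1/q,q}}. -/

import Mathlib

open MeasureTheory Set Filter
open scoped RealInnerProductSpace ENNReal Topology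

noncomputable section

/-- The distance on the circle `ℝ/ℤ` between the points represented by `x` and `y`. -/
def circDist (x y : ℝ) : ℝ := ‖((x - y : ℝ) : AddCircle (1 : ℝ))‖

/-- The representative of `z` modulo `1` lying in `(-1/2, 1/2]`. -/
def wrap (z : ℝ) : ℝ := 1 / 2 - Int.fract (1 / 2 - z)

/-- Squared wedge norm `|a ∧ b|² = |a|²|b|² - ⟨a,b⟩²`. -/
def wedgeSq {n : ℕ} (a b : EuclideanSpace ℝ (Fin n)) : ℝ :=
  ‖a‖ ^ 2 * ‖b‖ ^ 2 - ⟪a, b⟫ ^ 2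

/-- Wedge inner product `⟨a∧b, c∧d⟩ = ⟨a,c⟩⟨b,d⟩ - ⟨a,d⟩⟨b,c⟩`. -/
def wedgeInner {n : ℕ} (a b c d : EuclideanSpace ℝ (Fin n)) : ℝ :=
  ⟪a, c⟫ * ⟪b, d⟫ - ⟪a, d⟫ * ⟪b, c⟫

/-- Fundamental domain for double integrals over `(ℝ/ℤ)²`. -/
def unitSq : Set (ℝ × ℝ) := Ioc (0 : ℝ) 1 ×ˢ Ioc (0 : ℝ) 1

/-- The tangent-point functional `TP` (extended-real-valued). -/
def TPe {n : ℕ} (q : ℝ) (u : ℝ → EuclideanSpace ℝ (Fin n)) : ℝ≥0∞ :=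
  ENNReal.ofReal (1 / q) *
    ∫⁻ p in unitSq, ENNReal.ofReal
      (wedgeSq (deriv u p.2) (u p.1 - u p.2) ^ (q / 2) / ‖u p.1 - u p.2‖ ^ (2 * q))

/-- The tangent-point functional `TP` (real-valued). -/
def TPr {n : ℕ} (q : ℝ) (u : ℝ → EuclideanSpace ℝ (Fin n)) : ℝ := (TPe q u).toReal

/-- The `q`-th power of the Sobolev–Slobodeckii seminorm `[f]_{W^{s,q}}` on `ℝ/ℤ`. -/
def sobSemPow {n : ℕ} (s q : ℝ) (f : ℝ → EuclideanSpace ℝ (Fin n)) : ℝ≥0∞ :=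
  ∫⁻ p in unitSq, ENNReal.ofReal (‖f p.1 - f p.2‖ ^ q / circDist p.1 p.2 ^ (1 + s * q))

/-- The `W^{s,q}`-norm `‖f‖_{L^q} + [f]_{W^{s,q}}`. -/
def Wnorm {n : ℕ} (s q : ℝ) (f : ℝ → EuclideanSpace ℝ (Fin n)) : ℝ :=
  (∫ x in Ioc (0 : ℝ) 1, ‖f x‖ ^ q) ^ (1 / q) + (sobSemPow s q f).toReal ^ (1 / q)

/-- The bi-Lipschitz constant `bil(u) = sup_{x ≢ y} |x-y|_{ℝ/ℤ}/|u(x)-u(y)|`. -/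
def bil {n : ℕ} (u : ℝ → EuclideanSpace ℝ (Fin n)) : ℝ≥0∞ :=
  ⨆ (x : ℝ) (y : ℝ) (_ : circDist x y ≠ 0),
    ENNReal.ofReal (circDist x y) / ENNReal.ofReal ‖u x - u y‖

/-- The `L^∞`-norm of the derivative of `u`. -/
def linfD {n : ℕ} (u : ℝ → EuclideanSpace ℝ (Fin n)) : ℝ≥0∞ :=
  ⨆ x : ℝ, (‖deriv u x‖₊ : ℝ≥0∞)

/-- A periodic curve is embedded if it is injective on the circle `ℝ/ℤ`. -/
def Embedded {n : ℕ} (u : ℝ → EuclideanSpace ℝ (Fin n)) : Prop :=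
  ∀ x y : ℝ, u x = u y → ((x : AddCircle (1 : ℝ)) = (y : AddCircle (1 : ℝ)))

/-- A curve is regular if `min_{ℝ/ℤ} |u'| > 0`. -/
def Regular {n : ℕ} (u : ℝ → EuclideanSpace ℝ (Fin n)) : Prop :=
  0 < ⨅ x : ℝ, ‖deriv u x‖

/-- Orthogonal projection of `b` onto the orthogonal complement of `ℝ a`. -/
def projPerp {n : ℕ} (a b : EuclideanSpace ℝ (Fin n)) : EuclideanSpace ℝ (Fin n) :=
  b - (⟪b, a⟫ / ‖a‖ ^ 2) • a

/-- The classical tangent-point functional (extended-real-valued). -/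
def TPcle {n : ℕ} (q : ℝ) (u : ℝ → EuclideanSpace ℝ (Fin n)) : ℝ≥0∞ :=
  ENNReal.ofReal (1 / q) *
    ∫⁻ p in unitSq, ENNReal.ofReal
      (‖projPerp (deriv u p.2) (u p.1 - u p.2)‖ ^ q / ‖u p.1 - u p.2‖ ^ (2 * q) *
        (‖deriv u p.1‖ * ‖deriv u p.2‖))

/-- The integrand of the functional `M(u; v, w)`. -/
def Mintegrand {n : ℕ} (q : ℝ) (u v w : ℝ → EuclideanSpace ℝ (Fin n)) (p : ℝ × ℝ) : ℝ :=
  wedgeSq (deriv u p.2) (u p.1 - u p.2) ^ ((q - 2) / 2) / ‖u p.1 - u p.2‖ ^ (2 * q) *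
    wedgeInner (deriv u p.2) (u p.1 - u p.2) (deriv v p.2)
      (w p.1 - w p.2 - wrap (p.1 - p.2) • deriv w p.2)

/-- The functional `M(u; v, w)` appearing in the first variation of `TP`. -/
def Mfun {n : ℕ} (q : ℝ) (u v w : ℝ → EuclideanSpace ℝ (Fin n)) : ℝ :=
  ∫ p in unitSq, Mintegrand q u v w p

/-- The integrand of the functional `A(u; v, w)`. -/
def Aintegrand {n : ℕ} (q : ℝ) (u v w : ℝ → EuclideanSpace ℝ (Fin n)) (p : ℝ × ℝ) : ℝ :=
  wedgeSq (deriv u p.2) (u p.1 - u p.2) ^ (q / 2) / ‖u p.1 - u p.2‖ ^ (2 * q + 2) *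
    ⟪v p.1 - v p.2, w p.1 - w p.2⟫

/-- The functional `A(u; v, w)` appearing in the first variation of `TP`. -/
def Afun {n : ℕ} (q : ℝ) (u v w : ℝ → EuclideanSpace ℝ (Fin n)) : ℝ :=
  ∫ p in unitSq, Aintegrand q u v w p

/-- The first variation `δTP(u)[w] = M(u;u,w) + M(u;w,u) - 2A(u;u,w)`. -/
def deltaTP {n : ℕ} (q : ℝ) (u w : ℝ → EuclideanSpace ℝ (Fin n)) : ℝ :=
  Mfun q u u w + Mfun q u w u - 2 * Afun q u u w

/-- The `H²` inner product on periodic curves. -/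
def H2inner (v w : ℝ → EuclideanSpace ℝ (Fin 3)) : ℝ :=
  ∫ x in Ioc (0 : ℝ) 1,
    (⟪v x, w x⟫ + ⟪deriv v x, deriv w x⟫ + ⟪deriv (deriv v) x, deriv (deriv w) x⟫)

/-- The total energy `E(u) = (κ/2)∫|u''|² + ρ TP(u)`. -/
def energyE (κ ρ q : ℝ) (u : ℝ → EuclideanSpace ℝ (Fin 3)) : ℝ :=
  κ / 2 * (∫ x in Ioc (0 : ℝ) 1, ‖deriv (deriv u) x‖ ^ 2) + ρ * TPr q u

section CircleDistance

lemma wrap_eq_add_int (z : ℝ) : ∃ k : ℤ, wrap z = z + k := by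
  refine ⟨⌊1 / 2 - z⌋, ?_⟩
  unfold wrap
  have := Int.floor_add_fract (1 / 2 - z)
  linarith

lemma abs_wrap_le (z : ℝ) : |wrap z| ≤ 1 / 2 := by
  unfold wrap
  have h₁ := Int.fract_nonneg (1 / 2 - z)
  have h₂ := Int.fract_lt_one (1 / 2 - z)
  rw [abs_le]; constructor <;> linarith

lemma wrap_of_mem {z : ℝ} (h₁ : -(1 / 2) < z) (h₂ : z ≤ 1 / 2) : wrap z = z := by
  unfold wrap
  rw [Int.fract_eq_self.2 ⟨by linarith, by linarith⟩]; ring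

lemma wrap_add_one (z : ℝ) : wrap (z + 1) = wrap z := by
  unfold wrap
  rw [show 1 / 2 - (z + 1) = 1 / 2 - z - 1 by ring, Int.fract_sub_one]

lemma circDist_nonneg (x y : ℝ) : 0 ≤ circDist x y := norm_nonneg _

lemma circDist_eq_abs_wrap (x y : ℝ) : circDist x y = |wrap (x - y)| := by
  have h : ((x - y : ℝ) : AddCircle (1 : ℝ)) = (wrap (x - y) : ℝ) := by
    obtain ⟨k, hk⟩ := wrap_eq_add_int (x - y)
    rw [hk, AddCircle.coe_add, (AddCircle.coe_eq_zero_iff (1 : ℝ) (x := (k : ℝ))).2 ⟨k, by simp⟩,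
      add_zero]
  unfold circDist
  rw [h, AddCircle.norm_coe_eq_abs_iff _ one_ne_zero]
  simpa using abs_wrap_le (x - y)

lemma circDist_le_abs (x y : ℝ) : circDist x y ≤ |x - y| := by
  unfold circDist
  rw [UnitAddCircle.norm_eq]
  simpa using round_le (x - y) 0

lemma circDist_add_one_left (x y : ℝ) : circDist (x + 1) y = circDist x y := by
  rw [circDist_eq_abs_wrap, circDist_eq_abs_wrap, show x + 1 - y = x - y + 1 by ring, wrap_add_one]

lemma circDist_comm (x y : ℝ) : circDist x y = circDist y x := by
  unfold circDist
  rw [← norm_neg, ← AddCircle.coe_neg, neg_sub]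

lemma circDist_add_one_right (x y : ℝ) : circDist x (y + 1) = circDist x y := by
  rw [circDist_comm, circDist_add_one_left, circDist_comm]

lemma continuous_circDist : Continuous fun p : ℝ × ℝ => circDist p.1 p.2 := by
  unfold circDist
  exact ((AddCircle.continuous_mk' (1 : ℝ)).comp (continuous_fst.sub continuous_snd)).norm

lemma measurable_wrap : Measurable wrap := by
  unfold wrap; fun_prop

lemma Function.Periodic.apply_wrap {α : Type*} {f : ℝ → α} (hf : f.Periodic 1) (x y : ℝ) :
    f (y + wrap (x - y)) = f x := by
  obtain ⟨k, hk⟩ := wrap_eq_add_int (x - y)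
  rw [hk, show y + (x - y + k) = x + k * 1 by ring]
  exact hf.int_mul k x

lemma Function.Periodic.eq_of_circDist_eq_zero {α : Type*} {f : ℝ → α} (hf : f.Periodic 1)
    {x y : ℝ} (h : circDist x y = 0) : f x = f y := by
  rw [circDist_eq_abs_wrap, abs_eq_zero] at h
  rw [← hf.apply_wrap x y, h, add_zero]

end CircleDistance

section WedgeAlgebra

variable {n : ℕ} (a b c d : EuclideanSpace ℝ (Fin n))

lemma wedgeSq_nonneg : 0 ≤ wedgeSq a b := by
  unfold wedgeSq
  have := real_inner_mul_inner_self_le a b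
  rw [real_inner_self_eq_norm_sq, real_inner_self_eq_norm_sq] at this
  nlinarith

lemma wedgeSq_le : wedgeSq a b ≤ (‖a‖ * ‖b‖) ^ 2 := by
  unfold wedgeSq
  nlinarith [sq_nonneg ⟪a, b⟫]

lemma wedgeSq_sub_smul (s : ℝ) : wedgeSq a (b - s • a) = wedgeSq a b := by
  unfold wedgeSq
  simp only [← real_inner_self_eq_norm_sq, inner_sub_left, inner_sub_right, inner_smul_left,
    inner_smul_right, RCLike.conj_to_real, real_inner_comm a b]
  ring

lemma wedgeInner_sub_smul (s : ℝ) : wedgeInner a (b - s • a) c d = wedgeInner a b c d := by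
  unfold wedgeInner
  simp only [inner_sub_left, inner_smul_left, RCLike.conj_to_real]
  ring

lemma abs_wedgeInner_le : |wedgeInner a b c d| ≤ 2 * (‖a‖ * ‖b‖ * ‖c‖ * ‖d‖) := by
  unfold wedgeInner
  have h : ∀ x y z t : EuclideanSpace ℝ (Fin n), |⟪x, y⟫ * ⟪z, t⟫| ≤ ‖x‖ * ‖y‖ * (‖z‖ * ‖t‖) := by
    intro x y z t
    rw [abs_mul]
    gcongr <;> exact abs_real_inner_le_norm _ _
  have h₁ := h a c b d
  have h₂ := h a d b c
  have h₃ := abs_sub (⟪a, c⟫ * ⟪b, d⟫) (⟪a, d⟫ * ⟪b, c⟫)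
  nlinarith

lemma rpow_wedgeSq_le {r : ℝ} (hr : 0 ≤ r) (s : ℝ) :
    wedgeSq a b ^ (r / 2) ≤ (‖a‖ * ‖b - s • a‖) ^ r := by
  rw [← wedgeSq_sub_smul a b s]
  calc wedgeSq a (b - s • a) ^ (r / 2) ≤ ((‖a‖ * ‖b - s • a‖) ^ 2) ^ (r / 2) :=
        Real.rpow_le_rpow (wedgeSq_nonneg _ _) (wedgeSq_le _ _) (by positivity)
    _ = _ := by
        rw [← Real.rpow_natCast, ← Real.rpow_mul (by positivity)]; congr 1; push_cast; ring

end WedgeAlgebra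

section PeriodicIntegrals

lemma lintegral_rpow_le_lintegral_rpow_mul {α : Type*} [MeasurableSpace α] (μ : Measure α) {q : ℝ}
    (hq : 1 < q) {f : α → ℝ≥0∞} (hf : AEMeasurable f μ) :
    (∫⁻ x, f x ∂μ) ^ q ≤ (∫⁻ x, f x ^ q ∂μ) * μ univ ^ (q - 1) := by
  have hq0 : 0 < q := by linarith
  have h := ENNReal.lintegral_mul_le_Lp_mul_Lq μ (Real.HolderConjugate.conjExponent hq) hf
    (aemeasurable_const (b := (1 : ℝ≥0∞)))
  simp only [Pi.mul_apply, mul_one, ENNReal.one_rpow, lintegral_const, one_mul] at h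
  refine (ENNReal.rpow_le_rpow h hq0.le).trans_eq ?_
  rw [ENNReal.mul_rpow_of_nonneg _ _ hq0.le, ← ENNReal.rpow_mul, ← ENNReal.rpow_mul,
    one_div_mul_cancel hq0.ne', ENNReal.rpow_one, Real.conjExponent]
  congr 2
  have : q - 1 ≠ 0 := by linarith
  field_simp

lemma Function.Periodic.setLIntegral_Ioc_eq {f : ℝ → ℝ≥0∞} (hf : f.Periodic 1) (s t : ℝ) :
    ∫⁻ x in Ioc s (s + 1), f x = ∫⁻ x in Ioc t (t + 1), f x := by
  have key : ∀ r : ℝ, ∫⁻ x in Ioc r (r + 1), f x = ∫⁻ b : AddCircle (1 : ℝ), hf.lift b := by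
    intro r
    rw [← AddCircle.lintegral_preimage 1 r]
    rfl
  rw [key, key]

lemma setLIntegral_Ioc_add_left (f : ℝ → ℝ≥0∞) (a b y : ℝ) :
    ∫⁻ x in Ioc (y + a) (y + b), f x = ∫⁻ s in Ioc a b, f (y + s) := by
  rw [← lintegral_indicator measurableSet_Ioc, ← lintegral_indicator measurableSet_Ioc,
    ← lintegral_add_left_eq_self _ y]
  congr 1; ext s
  simp only [indicator, mem_Ioc, add_lt_add_iff_left, add_le_add_iff_left]

lemma setLIntegral_unitSq {g : ℝ × ℝ → ℝ≥0∞} (hg : Measurable g)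
    (h₁ : ∀ x y, g (x + 1, y) = g (x, y)) (h₂ : ∀ x y, g (x, y + 1) = g (x, y)) (s t : ℝ) :
    ∫⁻ p in unitSq, g p = ∫⁻ y in Ioc t (t + 1), ∫⁻ x in Ioc s (s + 1), g (x, y) := by
  unfold unitSq
  rw [Measure.volume_eq_prod, ← Measure.prod_restrict, lintegral_prod_symm _ hg.aemeasurable]
  have h : Function.Periodic (fun y => ∫⁻ x in Ioc s (s + 1), g (x, y)) 1 := by
    intro y; simp only [h₂]
  rw [h.setLIntegral_Ioc_eq t 0, zero_add]
  congr 1; ext y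
  have h' : Function.Periodic (fun x => g (x, y)) 1 := fun x => h₁ x y
  rw [h'.setLIntegral_Ioc_eq s 0, zero_add]

lemma setLIntegral_unitSq_eq_translate {g : ℝ × ℝ → ℝ≥0∞} (hg : Measurable g)
    (h₁ : ∀ x y, g (x + 1, y) = g (x, y)) :
    ∫⁻ p in unitSq, g p
      = ∫⁻ y in Ioc (0 : ℝ) 1, ∫⁻ s in Ioc (-(1 / 2) : ℝ) (1 / 2), g (y + s, y) := by
  unfold unitSq
  rw [Measure.volume_eq_prod, ← Measure.prod_restrict, lintegral_prod_symm _ hg.aemeasurable]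
  congr 1; ext y
  have h' : Function.Periodic (fun x => g (x, y)) 1 := fun x => h₁ x y
  rw [← setLIntegral_Ioc_add_left (fun x => g (x, y)), show y + 1 / 2 = y + -(1 / 2) + 1 by ring,
    ← h'.setLIntegral_Ioc_eq 0, zero_add]

lemma setLIntegral_comp_mul_le {k : ℝ → ℝ≥0∞} (hk : Measurable k) {θ : ℝ}
    (h0 : 0 < θ) (h1 : θ ≤ 1) :
    ∫⁻ s in Ioc (-(1 / 2) : ℝ) (1 / 2), k (θ * s)
      ≤ ENNReal.ofReal θ⁻¹ * ∫⁻ s in Ioc (-(1 / 2) : ℝ) (1 / 2), k s := by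
  set I : Set ℝ := Ioc (-(1 / 2) : ℝ) (1 / 2)
  have hI : MeasurableSet I := measurableSet_Ioc
  calc ∫⁻ s in I, k (θ * s) ≤ ∫⁻ s, I.indicator k (θ * s) := by
        rw [← lintegral_indicator hI]
        refine lintegral_mono fun s => ?_
        by_cases hs : s ∈ I
        · have : θ * s ∈ I := by
            obtain ⟨ha, hb⟩ := hs
            constructor <;> nlinarith
          simp [indicator_of_mem, hs, this]
        · simp [hs]
    _ = ∫⁻ s, I.indicator k s ∂(Measure.map (θ * ·) volume) := by
        rw [lintegral_map (hk.indicator hI) (measurable_const_mul θ)]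
    _ = _ := by
        rw [Real.map_volume_mul_left h0.ne', lintegral_smul_measure, lintegral_indicator hI,
          abs_of_pos (inv_pos.2 h0), smul_eq_mul]

end PeriodicIntegrals

section HardyInequality

variable {n : ℕ}

/-- The first-order Taylor remainder `u(x) - u(y) - (x - y) u'(y)` on the circle. -/
def taylorRem (u : ℝ → EuclideanSpace ℝ (Fin n)) (p : ℝ × ℝ) : EuclideanSpace ℝ (Fin n) :=
  u p.1 - u p.2 - wrap (p.1 - p.2) • deriv u p.2

lemma Function.Periodic.deriv_one {u : ℝ → EuclideanSpace ℝ (Fin n)} (hu : u.Periodic 1) :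
    (deriv u).Periodic 1 := by
  intro x
  rw [← deriv_comp_add_const, funext hu]

lemma measurable_taylorRem {u : ℝ → EuclideanSpace ℝ (Fin n)} (hu : ContDiff ℝ 1 u) :
    Measurable (taylorRem u) := by
  have h₁ := hu.continuous.measurable
  have h₂ := (hu.continuous_deriv le_rfl).measurable
  have h₃ := measurable_wrap
  unfold taylorRem
  fun_prop

lemma taylorRem_eq_smul_integral {u : ℝ → EuclideanSpace ℝ (Fin n)} (hu : ContDiff ℝ 1 u)
    (hup : u.Periodic 1) (x y : ℝ) : taylorRem u (x, y)
      = wrap (x - y) • ∫ θ in (0 : ℝ)..1, (deriv u (y + θ * wrap (x - y)) - deriv u y) := by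
  have hc := hu.continuous_deriv le_rfl
  have h := intervalIntegral.integral_unitInterval_deriv_eq_sub (f := u) (f' := deriv u)
    (z₀ := y) (z₁ := wrap (x - y)) (by fun_prop)
    (fun t _ => (hu.differentiable one_ne_zero _).hasDerivAt)
  rw [hup.apply_wrap] at h
  unfold taylorRem
  rw [intervalIntegral.integral_sub (Continuous.intervalIntegrable (by fun_prop) _ _) (by simp),
    smul_sub]
  simp only [smul_eq_mul] at h
  rw [h]
  simp

lemma enorm_intervalIntegral_rpow_le {q : ℝ} (hq : 1 < q) {f : ℝ → EuclideanSpace ℝ (Fin n)}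
    (hf : Continuous f) :
    ‖∫ θ in (0 : ℝ)..1, f θ‖ₑ ^ q ≤ ∫⁻ θ in Ioc (0 : ℝ) 1, ‖f θ‖ₑ ^ q := by
  rw [intervalIntegral.integral_of_le zero_le_one]
  have h₁ := ENNReal.rpow_le_rpow (enorm_integral_le_lintegral_enorm
    (μ := volume.restrict (Ioc (0 : ℝ) 1)) f) (by linarith : (0 : ℝ) ≤ q)
  have h₂ := lintegral_rpow_le_lintegral_rpow_mul (volume.restrict (Ioc (0 : ℝ) 1)) hq
    (f := fun x => ‖f x‖ₑ) hf.enorm.aemeasurable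
  simp only [MeasurableSet.univ, Measure.restrict_apply, univ_inter, Real.volume_Ioc, sub_zero,
    ENNReal.ofReal_one, ENNReal.one_rpow, mul_one] at h₂
  exact h₁.trans h₂

lemma ofReal_norm_rpow_div {q : ℝ} (hq : 0 ≤ q) (v : EuclideanSpace ℝ (Fin n)) {d : ℝ}
    (hd : 0 < d) : ENNReal.ofReal (‖v‖ ^ q / d) = ‖v‖ₑ ^ q / ENNReal.ofReal d := by
  rw [ENNReal.ofReal_div_of_pos hd, ← ENNReal.ofReal_rpow_of_nonneg (norm_nonneg _) hq,
    ofReal_norm]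

lemma measurable_sobKernel {f : ℝ → EuclideanSpace ℝ (Fin n)} (hf : Continuous f) (q r : ℝ) :
    Measurable fun p : ℝ × ℝ => ENNReal.ofReal (‖f p.1 - f p.2‖ ^ q / circDist p.1 p.2 ^ r) := by
  have h₁ := hf.measurable
  have h₂ := continuous_circDist.measurable
  fun_prop

lemma measurable_taylorKernel {u : ℝ → EuclideanSpace ℝ (Fin n)} (hu : ContDiff ℝ 1 u) (q r : ℝ) :
    Measurable fun p : ℝ × ℝ => ENNReal.ofReal (‖taylorRem u p‖ ^ q / circDist p.1 p.2 ^ r) := by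
  have h₁ := measurable_taylorRem hu
  have h₂ := continuous_circDist.measurable
  fun_prop

lemma sobSemPow_eq {q : ℝ} (hq : 0 < q) (f : ℝ → EuclideanSpace ℝ (Fin n)) :
    sobSemPow (1 - 1 / q) q f =
      ∫⁻ p in unitSq, ENNReal.ofReal (‖f p.1 - f p.2‖ ^ q / circDist p.1 p.2 ^ q) := by
  unfold sobSemPow
  rw [show 1 + (1 - 1 / q) * q = q by field_simp; ring]

lemma ofReal_taylorRem_le {q : ℝ} (hq : 1 < q) {u : ℝ → EuclideanSpace ℝ (Fin n)}
    (hu : ContDiff ℝ 1 u) (hup : u.Periodic 1) (y : ℝ) {s : ℝ}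
    (hs : s ∈ Ioc (-(1 / 2) : ℝ) (1 / 2)) (hs0 : s ≠ 0) :
    ENNReal.ofReal (‖taylorRem u (y + s, y)‖ ^ q / circDist (y + s) y ^ (2 * q)) ≤
      ∫⁻ θ in Ioc (0 : ℝ) 1, ENNReal.ofReal (θ ^ q) *
        ENNReal.ofReal (‖deriv u (y + θ * s) - deriv u y‖ ^ q / |θ * s| ^ q) := by
  have hc := hu.continuous_deriv le_rfl
  have hq0 : 0 < q := by linarith
  have hw : wrap s = s := wrap_of_mem hs.1 hs.2
  have hs' : 0 < |s| := abs_pos.2 hs0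
  rw [taylorRem_eq_smul_integral hu hup, circDist_eq_abs_wrap, add_sub_cancel_left, hw]
  set V := ∫ θ in (0 : ℝ)..1, (deriv u (y + θ * s) - deriv u y) with hV
  have h₁ : ‖s • V‖ ^ q / |s| ^ (2 * q) = ‖V‖ ^ q / |s| ^ q := by
    rw [norm_smul, Real.norm_eq_abs, Real.mul_rpow hs'.le (norm_nonneg _), two_mul,
      Real.rpow_add hs']
    have := (Real.rpow_pos_of_pos hs' q).ne'
    field_simp
  rw [h₁, ofReal_norm_rpow_div hq0.le _ (Real.rpow_pos_of_pos hs' q)]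
  have h₂ := enorm_intervalIntegral_rpow_le hq
    (f := fun θ => deriv u (y + θ * s) - deriv u y) (by fun_prop)
  rw [← hV] at h₂
  calc ‖V‖ₑ ^ q / ENNReal.ofReal (|s| ^ q)
      ≤ (∫⁻ θ in Ioc (0 : ℝ) 1, ‖deriv u (y + θ * s) - deriv u y‖ₑ ^ q)
          / ENNReal.ofReal (|s| ^ q) := by gcongr
    _ = ∫⁻ θ in Ioc (0 : ℝ) 1, ‖deriv u (y + θ * s) - deriv u y‖ₑ ^ q
          / ENNReal.ofReal (|s| ^ q) := by
        simp only [div_eq_mul_inv]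
        rw [lintegral_mul_const _ (by fun_prop)]
    _ = _ := by
        refine setLIntegral_congr_fun measurableSet_Ioc fun θ hθ => ?_
        have hθ0 : 0 < θ := hθ.1
        beta_reduce
        rw [← ofReal_norm_rpow_div hq0.le _ (Real.rpow_pos_of_pos hs' q),
          ← ENNReal.ofReal_mul (by positivity), abs_mul, abs_of_pos hθ0,
          Real.mul_rpow hθ0.le hs'.le]
        congr 1
        have := (Real.rpow_pos_of_pos hθ0 q).ne'
        field_simp

/-- A Hardy-type inequality: the Taylor remainder of a periodic curve is controlled by the
Sobolev–Slobodeckii seminorm of its derivative. -/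
lemma lintegral_taylorRem_le {q : ℝ} (hq : 1 < q) {u : ℝ → EuclideanSpace ℝ (Fin n)}
    (hu : ContDiff ℝ 1 u) (hup : u.Periodic 1) :
    ∫⁻ p in unitSq, ENNReal.ofReal (‖taylorRem u p‖ ^ q / circDist p.1 p.2 ^ (2 * q)) ≤
      sobSemPow (1 - 1 / q) q (deriv u) := by
  have hc := hu.continuous_deriv le_rfl
  have hq0 : 0 < q := by linarith
  have hdp := hup.deriv_one
  have hI : MeasurableSet (Ioc (-(1 / 2) : ℝ) (1 / 2)) := measurableSet_Ioc
  rw [sobSemPow_eq hq0,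
    setLIntegral_unitSq_eq_translate (measurable_taylorKernel hu _ _) (fun x y => by
      simp only [taylorRem, circDist_add_one_left, hup x]
      rw [show x + 1 - y = x - y + 1 by ring, wrap_add_one]),
    setLIntegral_unitSq_eq_translate (measurable_sobKernel hc _ _) (fun x y => by
      simp only [circDist_add_one_left, hdp x])]
  refine lintegral_mono fun y => ?_
  set k : ℝ → ℝ≥0∞ := fun σ => ENNReal.ofReal (‖deriv u (y + σ) - deriv u y‖ ^ q / |σ| ^ q)
    with hk
  have hkm : Measurable k := by rw [hk]; fun_prop
  have hR : ∫⁻ s in Ioc (-(1 / 2) : ℝ) (1 / 2),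
      ENNReal.ofReal (‖deriv u (y + s) - deriv u y‖ ^ q / circDist (y + s) y ^ q)
        = ∫⁻ s in Ioc (-(1 / 2) : ℝ) (1 / 2), k s := by
    refine setLIntegral_congr_fun hI fun s hs => ?_
    simp only [hk]
    rw [circDist_eq_abs_wrap, add_sub_cancel_left, wrap_of_mem hs.1 hs.2]
  simp only
  rw [hR]
  calc _ ≤ ∫⁻ s in Ioc (-(1 / 2) : ℝ) (1 / 2), ∫⁻ θ in Ioc (0 : ℝ) 1,
        ENNReal.ofReal (θ ^ q) * k (θ * s) := by
        refine lintegral_mono_ae ?_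
        have h0 : ∀ᵐ s ∂(volume.restrict (Ioc (-(1 / 2) : ℝ) (1 / 2))), s ≠ 0 :=
          ae_restrict_of_ae (Measure.ae_ne volume 0)
        filter_upwards [ae_restrict_mem hI, h0] with s hs hs0
        exact ofReal_taylorRem_le hq hu hup y hs hs0
    _ = ∫⁻ θ in Ioc (0 : ℝ) 1, ∫⁻ s in Ioc (-(1 / 2) : ℝ) (1 / 2),
        ENNReal.ofReal (θ ^ q) * k (θ * s) := by
        refine lintegral_lintegral_swap (Measurable.aemeasurable ?_)
        unfold Function.uncurry
        fun_prop
    _ ≤ ∫⁻ θ in Ioc (0 : ℝ) 1, ∫⁻ s in Ioc (-(1 / 2) : ℝ) (1 / 2), k s := by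
        refine setLIntegral_mono' measurableSet_Ioc fun θ hθ => ?_
        rw [lintegral_const_mul _ (by fun_prop)]
        calc _ ≤ ENNReal.ofReal (θ ^ q) * (ENNReal.ofReal θ⁻¹ *
              ∫⁻ s in Ioc (-(1 / 2) : ℝ) (1 / 2), k s) := by
              gcongr; exact setLIntegral_comp_mul_le hkm hθ.1 hθ.2
          _ ≤ 1 * ∫⁻ s in Ioc (-(1 / 2) : ℝ) (1 / 2), k s := by
              rw [← mul_assoc, ← ENNReal.ofReal_mul (Real.rpow_nonneg hθ.1.le _)]
              gcongr
              rw [ENNReal.ofReal_le_one, ← Real.rpow_neg_one, ← Real.rpow_add hθ.1]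
              exact Real.rpow_le_one hθ.1.le hθ.2 (by linarith)
          _ = _ := one_mul _
    _ = _ := by simp

end HardyInequality

section SobolevEmbedding

variable {n : ℕ}

lemma lintegral_lintegral_enorm_sub_rpow_le {q : ℝ} (hq : 1 < q)
    {f : ℝ → EuclideanSpace ℝ (Fin n)} (hf : Continuous f) (hfp : f.Periodic 1) (a : ℝ) {h : ℝ}
    (h1 : h ≤ 1) :
    (∫⁻ y in Ioc a (a + h), ∫⁻ x in Ioc a (a + h), ‖f x - f y‖ₑ) ^ q ≤
      ENNReal.ofReal h ^ q * sobSemPow (1 - 1 / q) q f *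
        (ENNReal.ofReal h * ENNReal.ofReal h) ^ (q - 1) := by
  have hq0 : 0 < q := by linarith
  set μ := volume.restrict (Ioc a (a + h)) with hμ
  have hm : Measurable fun p : ℝ × ℝ => ‖f p.1 - f p.2‖ₑ := by fun_prop
  have hJ := lintegral_rpow_le_lintegral_rpow_mul (μ.prod μ) hq hm.aemeasurable
  have hμu : (μ.prod μ) univ = ENNReal.ofReal h * ENNReal.ofReal h := by
    rw [← univ_prod_univ, Measure.prod_prod, hμ]; simp
  rw [hμu, lintegral_prod_symm _ hm.aemeasurable,
    lintegral_prod_symm _ (hm.pow_const q).aemeasurable] at hJ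
  refine hJ.trans ?_
  gcongr
  rw [sobSemPow_eq hq0, setLIntegral_unitSq (measurable_sobKernel hf _ _)
    (fun x y => by simp only [circDist_add_one_left, hfp x])
    (fun x y => by simp only [circDist_add_one_right, hfp y]) a a,
    ← lintegral_const_mul' _ _ (by simp [hq0.le])]
  have hsub : Ioc a (a + h) ⊆ Ioc a (a + 1) := Ioc_subset_Ioc_right (by linarith)
  refine (setLIntegral_mono' measurableSet_Ioc fun y hy => ?_).trans
    (lintegral_mono_set hsub)
  rw [← lintegral_const_mul' _ _ (by simp [hq0.le])]
  refine (setLIntegral_mono' measurableSet_Ioc fun x hx => ?_).trans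
    (lintegral_mono_set hsub)
  rcases (circDist_nonneg x y).eq_or_lt with h0 | h0
  · rw [hfp.eq_of_circDist_eq_zero h0.symm]
    simp [hq0]
  · have hd : circDist x y ≤ h := (circDist_le_abs x y).trans
      (abs_le.2 ⟨by linarith [hx.1, hy.2], by linarith [hx.2, hy.1]⟩)
    have hh : 0 < h := h0.trans_le hd
    rw [ENNReal.ofReal_rpow_of_nonneg hh.le hq0.le, ← ENNReal.ofReal_mul (by positivity),
      ← ofReal_norm, ENNReal.ofReal_rpow_of_nonneg (norm_nonneg _) hq0.le]
    apply ENNReal.ofReal_le_ofReal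
    rw [mul_div_assoc', le_div_iff₀ (by positivity), mul_comm]
    gcongr

lemma norm_average_sub_average_le {q : ℝ} (hq : 1 < q)
    {f : ℝ → EuclideanSpace ℝ (Fin n)} (hf : Continuous f) (hfp : f.Periodic 1)
    (hS : sobSemPow (1 - 1 / q) q f < ⊤) (a : ℝ) {h : ℝ} (h0 : 0 < h) (h1 : h ≤ 1) :
    ‖h⁻¹ • (∫ x in a..a + h, f x) - (h / 2)⁻¹ • ∫ x in a..a + h / 2, f x‖ ≤
      2 * (sobSemPow (1 - 1 / q) q f).toReal ^ (1 / q) * h ^ (1 - 2 / q) := by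
  have hq0 : 0 < q := by linarith
  set S := sobSemPow (1 - 1 / q) q f with hSdef
  set m₁ := h⁻¹ • (∫ x in a..a + h, f x) with hm₁
  set m₂ := (h / 2)⁻¹ • ∫ x in a..a + h / 2, f x with hm₂
  have hfi : ∀ b c : ℝ, IntervalIntegrable f volume b c := fun b c => hf.intervalIntegrable b c
  have hident : (h * (h / 2)) • (m₁ - m₂)
      = ∫ y in a..a + h / 2, ∫ x in a..a + h, (f x - f y) := by
    have e₁ : ∀ y, ∫ x in a..a + h, (f x - f y) = (∫ x in a..a + h, f x) - h • f y := by
      intro y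
      rw [intervalIntegral.integral_sub (hfi _ _) (by simp)]
      simp
    simp only [e₁]
    rw [intervalIntegral.integral_sub (g := fun y => h • f y) intervalIntegrable_const
      ((hfi _ _).smul h), intervalIntegral.integral_smul]
    simp only [intervalIntegral.integral_const, add_sub_cancel_left, hm₁, hm₂, smul_sub, smul_smul]
    congr 2 <;> field_simp
  have hle : ‖(h * (h / 2)) • (m₁ - m₂)‖ₑ
      ≤ ∫⁻ y in Ioc a (a + h), ∫⁻ x in Ioc a (a + h), ‖f x - f y‖ₑ := by
    rw [hident, intervalIntegral.integral_of_le (by linarith)]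
    refine (enorm_integral_le_lintegral_enorm _).trans ?_
    refine le_trans (lintegral_mono fun y => ?_)
      (lintegral_mono_set (Ioc_subset_Ioc_right (by linarith)))
    rw [intervalIntegral.integral_of_le (by linarith)]
    exact enorm_integral_le_lintegral_enorm _
  have hpow := (ENNReal.rpow_le_rpow hle hq0.le).trans
    (lintegral_lintegral_enorm_sub_rpow_le hq hf hfp a h1)
  have hreal : ‖(h * (h / 2)) • (m₁ - m₂)‖ ^ q ≤ h ^ q * S.toReal * (h * h) ^ (q - 1) := by
    have hfin : ENNReal.ofReal h ^ q * S * (ENNReal.ofReal h * ENNReal.ofReal h) ^ (q - 1) ≠ ⊤ := by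
      refine ENNReal.mul_ne_top (ENNReal.mul_ne_top ?_ hS.ne) ?_
      · exact ENNReal.rpow_ne_top_of_nonneg hq0.le ENNReal.ofReal_ne_top
      · exact ENNReal.rpow_ne_top_of_nonneg (by linarith)
          (ENNReal.mul_ne_top ENNReal.ofReal_ne_top ENNReal.ofReal_ne_top)
    have := ENNReal.toReal_mono hfin hpow
    simpa [ENNReal.toReal_mul, ← ENNReal.toReal_rpow, ENNReal.toReal_ofReal h0.le] using this
  have hroot : ‖(h * (h / 2)) • (m₁ - m₂)‖
      ≤ (h ^ q * S.toReal * (h * h) ^ (q - 1)) ^ (1 / q) := by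
    rw [one_div, Real.le_rpow_inv_iff_of_pos (norm_nonneg _) (by positivity) hq0]
    exact hreal
  have hval : (h ^ q * S.toReal * (h * h) ^ (q - 1)) ^ (1 / q)
      = h * (h / 2) * (2 * S.toReal ^ (1 / q) * h ^ (1 - 2 / q)) := by
    rw [← pow_two, Real.mul_rpow (by positivity) (by positivity),
      Real.mul_rpow (by positivity) (by positivity), ← Real.rpow_mul h0.le,
      mul_one_div_cancel hq0.ne', Real.rpow_one, ← Real.rpow_natCast, ← Real.rpow_mul h0.le,
      ← Real.rpow_mul h0.le]
    have : h ^ (((2 : ℕ) : ℝ) * (q - 1) * (1 / q)) = h * h ^ (1 - 2 / q) := by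
      rw [← Real.rpow_one_add' h0.le]
      · congr 1; push_cast; field_simp; ring
      · have : 2 / q < 2 := by rw [div_lt_iff₀ hq0]; linarith
        linarith
    rw [this]; ring
  rw [hval, norm_smul, Real.norm_of_nonneg (by positivity)] at hroot
  exact le_of_mul_le_mul_left hroot (by positivity)

lemma tendsto_average {f : ℝ → EuclideanSpace ℝ (Fin n)} (hf : Continuous f) (a : ℝ) :
    Tendsto (fun h : ℝ => h⁻¹ • ∫ x in a..a + h, f x) (𝓝[≠] 0) (𝓝 (f a)) := by
  have h := (hf.integral_hasStrictDerivAt a a).hasDerivAt.tendsto_slope_zero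
  simpa using h

lemma norm_intervalIntegral_le {q : ℝ} (hq : 1 < q) {f : ℝ → EuclideanSpace ℝ (Fin n)}
    (hf : Continuous f) :
    ‖∫ x in (0 : ℝ)..1, f x‖ ≤ (∫ x in Ioc (0 : ℝ) 1, ‖f x‖ ^ q) ^ (1 / q) := by
  have hq0 : 0 < q := by linarith
  have h := enorm_intervalIntegral_rpow_le hq hf
  have hi : IntegrableOn (fun x => ‖f x‖ ^ q) (Ioc (0 : ℝ) 1) := by
    have : Continuous fun x => ‖f x‖ ^ q :=
      hf.norm.rpow_const fun _ => Or.inr hq0.le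
    exact (this.integrableOn_Icc).mono_set Ioc_subset_Icc_self
  have e : ∫⁻ x in Ioc (0 : ℝ) 1, ‖f x‖ₑ ^ q
      = ENNReal.ofReal (∫ x in Ioc (0 : ℝ) 1, ‖f x‖ ^ q) := by
    rw [ofReal_integral_eq_lintegral_ofReal hi (ae_of_all _ fun x => by positivity)]
    congr 1; ext x
    rw [← ENNReal.ofReal_rpow_of_nonneg (norm_nonneg _) hq0.le, ofReal_norm]
  have hnn : 0 ≤ ∫ x in Ioc (0 : ℝ) 1, ‖f x‖ ^ q := integral_nonneg fun x => by positivity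
  rw [e, ← ofReal_norm, ENNReal.ofReal_rpow_of_nonneg (norm_nonneg _) hq0.le,
    ENNReal.ofReal_le_ofReal_iff hnn] at h
  rw [one_div, Real.le_rpow_inv_iff_of_pos (norm_nonneg _) hnn hq0]
  exact h

lemma integral_norm_rpow_nonneg (f : ℝ → EuclideanSpace ℝ (Fin n)) (q : ℝ) :
    0 ≤ ∫ x in Ioc (0 : ℝ) 1, ‖f x‖ ^ q := integral_nonneg fun x => by positivity

/-- Fractional Morrey embedding `W^{1-1/q,q} ⊂ L^∞` on the circle for `q > 2`. -/
lemma exists_norm_le_Wnorm (n : ℕ) {q : ℝ} (hq : 2 < q) :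
    ∃ C : ℝ, 0 < C ∧ ∀ f : ℝ → EuclideanSpace ℝ (Fin n), Continuous f → f.Periodic 1 →
      sobSemPow (1 - 1 / q) q f < ⊤ → ∀ x, ‖f x‖ ≤ C * Wnorm (1 - 1 / q) q f := by
  have hq1 : 1 < q := by linarith
  have hq0 : 0 < q := by linarith
  have hexp : 0 < 1 - 2 / q := by
    have : 2 / q < 1 := by rw [div_lt_one hq0]; exact hq
    linarith
  set r : ℝ := (1 / 2) ^ (1 - 2 / q) with hr
  have hr0 : 0 < r := by positivity
  have hr1 : r < 1 := Real.rpow_lt_one (by norm_num) (by norm_num) hexp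
  have hr1' : 0 < 1 - r := by linarith
  refine ⟨1 + 2 / (1 - r), by positivity, fun f hf hfp hS a => ?_⟩
  set T := (sobSemPow (1 - 1 / q) q f).toReal ^ (1 / q) with hT
  have hT0 : 0 ≤ T := by positivity
  set N := (∫ x in Ioc (0 : ℝ) 1, ‖f x‖ ^ q) ^ (1 / q) with hN
  have hN0 : 0 ≤ N := Real.rpow_nonneg (integral_norm_rpow_nonneg f q) _
  set m : ℕ → EuclideanSpace ℝ (Fin n) :=
    fun k => ((1 / 2 : ℝ) ^ k)⁻¹ • ∫ x in a..a + (1 / 2 : ℝ) ^ k, f x with hm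
  have hstep : ∀ k, dist (m k) (m (k + 1)) ≤ 2 * T * r ^ k := by
    intro k
    have := norm_average_sub_average_le hq1 hf hfp hS a (h := (1 / 2 : ℝ) ^ k) (by positivity)
      (pow_le_one₀ (by norm_num) (by norm_num))
    have e : ((1 / 2 : ℝ) ^ k) ^ (1 - 2 / q) = r ^ k := by
      rw [hr, ← Real.rpow_natCast, ← Real.rpow_mul (by norm_num), mul_comm,
        Real.rpow_mul (by norm_num), Real.rpow_natCast]
    rw [e] at this
    rw [dist_eq_norm]
    simpa only [hm, pow_succ, mul_one_div] using this
  have hlim : Tendsto m atTop (𝓝 (f a)) := by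
    refine (tendsto_average hf a).comp (tendsto_nhdsWithin_iff.2 ⟨?_, ?_⟩)
    · exact tendsto_pow_atTop_nhds_zero_of_lt_one (by norm_num) (by norm_num)
    · exact Eventually.of_forall fun k => by simp
  have hdist := dist_le_of_le_geometric_of_tendsto₀ r (2 * T) hr1 hstep hlim
  have hm0 : ‖m 0‖ ≤ N := by
    have : m 0 = ∫ x in (0 : ℝ)..1, f x := by
      have := hfp.intervalIntegral_add_eq a 0
      simpa [hm] using this
    rw [this]
    exact norm_intervalIntegral_le hq1 hf
  have htri : ‖f a‖ ≤ ‖m 0‖ + dist (m 0) (f a) := by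
    rw [dist_eq_norm, norm_sub_rev]
    simpa using norm_add_le (m 0) (f a - m 0)
  unfold Wnorm
  rw [← hN, ← hT]
  have : 0 ≤ 2 / (1 - r) * N := by positivity
  calc ‖f a‖ ≤ N + 2 * T / (1 - r) := by linarith
    _ ≤ (1 + 2 / (1 - r)) * (N + T) := by
      have : 2 * T / (1 - r) = 2 / (1 - r) * T := by ring
      rw [this]; nlinarith

end SobolevEmbedding

section CurveBounds

variable {n : ℕ}

lemma norm_sub_le_mul_circDist {u : ℝ → EuclideanSpace ℝ (Fin n)} (hu : ContDiff ℝ 1 u)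
    (hup : u.Periodic 1) {L : ℝ} (hL : ∀ x, ‖deriv u x‖ ≤ L) (x y : ℝ) :
    ‖u x - u y‖ ≤ L * circDist x y := by
  have h := convex_univ.norm_image_sub_le_of_norm_deriv_le (f := u) (C := L)
    (fun x _ => hu.differentiable one_ne_zero x) (fun x _ => hL x) (mem_univ y)
    (mem_univ (y + wrap (x - y)))
  rwa [hup.apply_wrap, add_sub_cancel_left, Real.norm_eq_abs, ← circDist_eq_abs_wrap] at h

lemma circDist_le_bil_mul {u : ℝ → EuclideanSpace ℝ (Fin n)} (hb : bil u < ⊤) (x y : ℝ) :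
    circDist x y ≤ (bil u).toReal * ‖u x - u y‖ := by
  by_cases h0 : circDist x y = 0
  · rw [h0]; positivity
  have hle : ENNReal.ofReal (circDist x y) / ENNReal.ofReal ‖u x - u y‖ ≤ bil u := by
    unfold bil
    exact le_iSup_of_le x (le_iSup_of_le y (le_iSup_of_le h0 le_rfl))
  have hd : 0 < circDist x y := (circDist_nonneg x y).lt_of_ne' h0
  have hne : 0 < ‖u x - u y‖ := by
    refine (norm_nonneg _).lt_of_ne' fun h => ?_
    rw [h, ENNReal.ofReal_zero, ENNReal.div_zero (by simpa using hd)] at hle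
    exact absurd hb (not_lt.2 hle)
  rw [← ENNReal.ofReal_div_of_pos hne, ← ENNReal.ofReal_toReal hb.ne,
    ENNReal.ofReal_le_ofReal_iff ENNReal.toReal_nonneg, div_le_iff₀ hne] at hle
  exact hle

lemma one_le_mul_norm_deriv {u : ℝ → EuclideanSpace ℝ (Fin n)} (hu : ContDiff ℝ 1 u) {B : ℝ}
    (hB : ∀ x y, circDist x y ≤ B * ‖u x - u y‖) (y : ℝ) : 1 ≤ B * ‖deriv u y‖ := by
  have h := ((hu.differentiable one_ne_zero y).hasDerivAt.tendsto_slope_zero.norm).const_mul B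
  refine ge_of_tendsto h ?_
  have hnear : ∀ᶠ t : ℝ in 𝓝[≠] 0, t ∈ Metric.ball (0 : ℝ) (1 / 2) :=
    nhdsWithin_le_nhds (Metric.ball_mem_nhds _ (by norm_num))
  filter_upwards [hnear, self_mem_nhdsWithin] with t ht ht0
  have ht' : |t| < 1 / 2 := by simpa using ht
  have ht0' : 0 < |t| := abs_pos.2 ht0
  have hB' := hB (y + t) y
  rw [circDist_eq_abs_wrap, add_sub_cancel_left,
    wrap_of_mem (abs_lt.1 ht').1 (abs_lt.1 ht').2.le] at hB'
  rw [norm_smul, norm_inv, Real.norm_eq_abs, ← mul_assoc, mul_comm B, mul_assoc,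
    inv_mul_eq_div, one_le_div ht0']
  exact hB'

lemma norm_deriv_le_linfD {u : ℝ → EuclideanSpace ℝ (Fin n)} (hu : ContDiff ℝ 1 u)
    (hup : u.Periodic 1) (x : ℝ) : ‖deriv u x‖ ≤ (linfD u).toReal := by
  obtain ⟨M, hM⟩ := (hup.deriv_one.isBounded_of_continuous one_ne_zero
    (hu.continuous_deriv le_rfl)).exists_norm_le
  have hfin : linfD u ≠ ⊤ := by
    refine ne_top_of_le_ne_top (ENNReal.ofReal_ne_top (r := M)) (iSup_le fun y => ?_)
    rw [← enorm_eq_nnnorm, ← ofReal_norm]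
    exact ENNReal.ofReal_le_ofReal (hM _ (mem_range_self y))
  have := ENNReal.toReal_mono hfin
    (le_iSup (fun x : ℝ => (‖deriv u x‖₊ : ℝ≥0∞)) x)
  simpa using this

end CurveBounds

section IntegrandBounds

variable {n : ℕ} {q : ℝ}

lemma one_div_rpow_le {d B D r : ℝ} (hd : 0 ≤ d) (hB : 0 ≤ B) (hD : 0 ≤ D) (h : d ≤ B * D)
    (h0 : d = 0 → D = 0) (hr : 0 < r) : 1 / D ^ r ≤ B ^ r / d ^ r := by
  rcases hd.eq_or_lt with hd0 | hd0
  · rw [h0 hd0.symm, ← hd0, Real.zero_rpow hr.ne']; simp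
  · have hD0 : 0 < D := hD.lt_of_ne (by rintro rfl; linarith)
    rw [div_le_div_iff₀ (by positivity) (by positivity), one_mul, ← Real.mul_rpow hB hD]
    gcongr

lemma abs_Mintegrand_le (hq : 2 < q) {u v w : ℝ → EuclideanSpace ℝ (Fin n)} {p : ℝ × ℝ}
    {B L K : ℝ} (hB : 0 ≤ B) (hL : ‖deriv u p.2‖ ≤ L) (hK : ‖deriv v p.2‖ ≤ K)
    (hd : circDist p.1 p.2 ≤ B * ‖u p.1 - u p.2‖)
    (h0 : circDist p.1 p.2 = 0 → u p.1 = u p.2) :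
    |Mintegrand q u v w p| ≤ 2 * B ^ (2 * q) * L ^ (q - 1) * K *
      (‖taylorRem u p‖ ^ (q - 1) * ‖taylorRem w p‖ / circDist p.1 p.2 ^ (2 * q)) := by
  have hL0 : 0 ≤ L := (norm_nonneg _).trans hL
  have hK0 : 0 ≤ K := (norm_nonneg _).trans hK
  set R := ‖taylorRem u p‖ with hR
  set S := ‖taylorRem w p‖ with hS
  have hR0 : 0 ≤ R := norm_nonneg _
  have hS0 : 0 ≤ S := norm_nonneg _
  set d := circDist p.1 p.2 with hdd
  have hd0 : 0 ≤ d := circDist_nonneg _ _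
  have hW : wedgeSq (deriv u p.2) (u p.1 - u p.2) ^ ((q - 2) / 2) ≤ (L * R) ^ (q - 2) := by
    refine (rpow_wedgeSq_le _ _ (by linarith) (wrap (p.1 - p.2))).trans ?_
    exact Real.rpow_le_rpow (by positivity) (by gcongr; exact le_rfl) (by linarith)
  have hI : |wedgeInner (deriv u p.2) (u p.1 - u p.2) (deriv v p.2)
      (w p.1 - w p.2 - wrap (p.1 - p.2) • deriv w p.2)| ≤ 2 * (L * R * K * S) := by
    rw [← wedgeInner_sub_smul _ _ _ _ (wrap (p.1 - p.2))]
    refine (abs_wedgeInner_le _ _ _ _).trans ?_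
    gcongr <;> exact le_rfl
  have hD := one_div_rpow_le hd0 hB (norm_nonneg (u p.1 - u p.2)) hd
    (fun h => by rw [h0 h, sub_self, norm_zero]) (by linarith : 0 < 2 * q)
  have hpow : ∀ x : ℝ, 0 ≤ x → x ^ (q - 2) * x = x ^ (q - 1) := fun x hx => by
    rw [← Real.rpow_add_one' hx (by linarith)]; congr 1; ring
  have hW0 : 0 ≤ wedgeSq (deriv u p.2) (u p.1 - u p.2) ^ ((q - 2) / 2) :=
    Real.rpow_nonneg (wedgeSq_nonneg _ _) _
  unfold Mintegrand
  rw [abs_mul, abs_div, abs_of_nonneg hW0,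
    abs_of_nonneg (Real.rpow_nonneg (norm_nonneg (u p.1 - u p.2)) _),
    div_eq_mul_one_div]
  calc _ ≤ (L * R) ^ (q - 2) * (B ^ (2 * q) / d ^ (2 * q)) * (2 * (L * R * K * S)) := by gcongr
    _ = 2 * B ^ (2 * q) * (L ^ (q - 2) * L) * K *
        ((R ^ (q - 2) * R) * S / d ^ (2 * q)) := by
      rw [Real.mul_rpow hL0 hR0]; ring
    _ = _ := by rw [hpow L hL0, hpow R hR0]

lemma abs_Aintegrand_le (hq : 2 < q) {u w : ℝ → EuclideanSpace ℝ (Fin n)} {p : ℝ × ℝ}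
    {B L K : ℝ} (hB : 0 ≤ B) (hL : ‖deriv u p.2‖ ≤ L)
    (hu : ‖u p.1 - u p.2‖ ≤ L * circDist p.1 p.2) (hw : ‖w p.1 - w p.2‖ ≤ K * circDist p.1 p.2)
    (hd : circDist p.1 p.2 ≤ B * ‖u p.1 - u p.2‖) :
    |Aintegrand q u u w p| ≤ B ^ (2 * q + 2) * L ^ (q + 1) * K *
      (‖taylorRem u p‖ ^ q / circDist p.1 p.2 ^ (2 * q)) := by
  have hL0 : 0 ≤ L := (norm_nonneg _).trans hL
  set R := ‖taylorRem u p‖ with hR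
  have hR0 : 0 ≤ R := norm_nonneg _
  set d := circDist p.1 p.2 with hdd
  have hd0 : 0 ≤ d := circDist_nonneg _ _
  have hW : wedgeSq (deriv u p.2) (u p.1 - u p.2) ^ (q / 2) ≤ (L * R) ^ q := by
    refine (rpow_wedgeSq_le _ _ (by linarith) (wrap (p.1 - p.2))).trans ?_
    exact Real.rpow_le_rpow (by positivity) (by gcongr; exact le_rfl) (by linarith)
  have hD := one_div_rpow_le hd0 hB (norm_nonneg (u p.1 - u p.2)) hd
    (fun h => le_antisymm (by simpa [h] using hu) (norm_nonneg _)) (by linarith : 0 < 2 * q + 2)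
  have hI : |⟪u p.1 - u p.2, w p.1 - w p.2⟫| ≤ L * d * (K * d) :=
    (abs_real_inner_le_norm _ _).trans (by gcongr)
  have hW0 : 0 ≤ wedgeSq (deriv u p.2) (u p.1 - u p.2) ^ (q / 2) :=
    Real.rpow_nonneg (wedgeSq_nonneg _ _) _
  unfold Aintegrand
  rw [abs_mul, abs_div, abs_of_nonneg hW0,
    abs_of_nonneg (Real.rpow_nonneg (norm_nonneg (u p.1 - u p.2)) _),
    div_eq_mul_one_div]
  calc _ ≤ (L * R) ^ q * (B ^ (2 * q + 2) / d ^ (2 * q + 2)) * (L * d * (K * d)) := by gcongr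
    _ = B ^ (2 * q + 2) * (L ^ q * L) * K * (R ^ q * (d ^ 2 / d ^ (2 * q + 2))) := by
      rw [Real.mul_rpow hL0 hR0]; ring
    _ = _ := by
      rw [← Real.rpow_add_one' hL0 (by linarith)]
      congr 1
      rcases hd0.eq_or_lt with h | h
      · rw [← h, Real.zero_rpow (by linarith), Real.zero_rpow (by linarith)]; simp
      · have h₁ : d ^ (2 * q + 2) = d ^ (2 * q) * d ^ 2 := by
          rw [Real.rpow_add h]; norm_cast
        rw [h₁]
        have := (Real.rpow_pos_of_pos h (2 * q)).ne'
        field_simp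

end IntegrandBounds

section PointwiseDerivative

variable {n : ℕ} {q : ℝ}

lemma hasDerivAt_wedgeSq (a b c e : EuclideanSpace ℝ (Fin n)) (t : ℝ) :
    HasDerivAt (fun τ : ℝ => wedgeSq (a + τ • c) (b + τ • e))
      (2 * (wedgeInner (a + t • c) (b + t • e) (a + t • c) e +
        wedgeInner (a + t • c) (b + t • e) c (b + t • e))) t := by
  have hline : ∀ x y : EuclideanSpace ℝ (Fin n), HasDerivAt (fun τ : ℝ => x + τ • y) y t :=
    fun x y => by simpa using ((hasDerivAt_id t).smul_const y).const_add x
  have haa := (hline a c).inner ℝ (hline a c)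
  have hbb := (hline b e).inner ℝ (hline b e)
  have hab := (hline a c).inner ℝ (hline b e)
  have h := (haa.mul hbb).sub (hab.pow 2)
  refine (h.congr_of_eventuallyEq (Eventually.of_forall fun τ => ?_)).congr_deriv ?_
  · simp only [wedgeSq, ← real_inner_self_eq_norm_sq, Pi.sub_apply, Pi.mul_apply, Pi.pow_apply]
  · simp only [wedgeInner]
    rw [real_inner_comm (a + t • c) c, real_inner_comm (b + t • e) e,
      real_inner_comm (a + t • c) (b + t • e), real_inner_comm (b + t • e) c]
    push_cast
    ring

lemma hasDerivAt_wedgeQuotient (hq : 2 < q) (a b c e : EuclideanSpace ℝ (Fin n)) {t : ℝ}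
    (hne : b + t • e ≠ 0) :
    HasDerivAt (fun τ : ℝ => wedgeSq (a + τ • c) (b + τ • e) ^ (q / 2) / ‖b + τ • e‖ ^ (2 * q))
      (q * (wedgeSq (a + t • c) (b + t • e) ^ ((q - 2) / 2) / ‖b + t • e‖ ^ (2 * q) *
          (wedgeInner (a + t • c) (b + t • e) (a + t • c) e +
            wedgeInner (a + t • c) (b + t • e) c (b + t • e)) -
        2 * (wedgeSq (a + t • c) (b + t • e) ^ (q / 2) / ‖b + t • e‖ ^ (2 * q + 2) *
          ⟪b + t • e, e⟫))) t := by
  have hline : HasDerivAt (fun τ : ℝ => b + τ • e) e t := by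
    simpa using ((hasDerivAt_id t).smul_const e).const_add b
  have hpos : 0 < ‖b + t • e‖ := norm_pos_iff.2 hne
  have hW := (hasDerivAt_wedgeSq a b c e t).rpow_const (p := q / 2) (Or.inr (by linarith))
  have hD := (hline.norm_sq).rpow_const (p := -q) (Or.inl (by positivity))
  have hsq : ∀ x : ℝ, 0 ≤ x → ∀ r : ℝ, (x ^ 2) ^ r = x ^ (2 * r) := fun x hx r => by
    rw [← Real.rpow_natCast, ← Real.rpow_mul hx]; norm_num
  refine ((hW.mul hD).congr_of_eventuallyEq (Eventually.of_forall fun τ => ?_)).congr_deriv ?_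
  · simp only [Pi.mul_apply]
    rw [hsq _ (norm_nonneg _), div_eq_mul_inv, ← Real.rpow_neg (norm_nonneg _)]
    ring_nf
  · rw [hsq _ hpos.le, hsq _ hpos.le, show q / 2 - 1 = (q - 2) / 2 by ring,
      div_eq_mul_inv _ (‖b + t • e‖ ^ (2 * q)), div_eq_mul_inv _ (‖b + t • e‖ ^ (2 * q + 2)),
      ← Real.rpow_neg hpos.le, ← Real.rpow_neg hpos.le,
      show 2 * (-q - 1) = -(2 * q + 2) by ring, show 2 * -q = -(2 * q) by ring]
    ring

/-- The integrand of the tangent-point functional. -/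
def tpIntegrand (q : ℝ) (u : ℝ → EuclideanSpace ℝ (Fin n)) (p : ℝ × ℝ) : ℝ :=
  wedgeSq (deriv u p.2) (u p.1 - u p.2) ^ (q / 2) / ‖u p.1 - u p.2‖ ^ (2 * q)

/-- The integrand of the first variation of the tangent-point functional. -/
def firstVarIntegrand (q : ℝ) (u w : ℝ → EuclideanSpace ℝ (Fin n)) (p : ℝ × ℝ) : ℝ :=
  Mintegrand q u u w p + Mintegrand q u w u p - 2 * Aintegrand q u u w p

lemma firstVarIntegrand_eq (u w : ℝ → EuclideanSpace ℝ (Fin n)) (p : ℝ × ℝ) :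
    firstVarIntegrand q u w p =
      wedgeSq (deriv u p.2) (u p.1 - u p.2) ^ ((q - 2) / 2) / ‖u p.1 - u p.2‖ ^ (2 * q) *
          (wedgeInner (deriv u p.2) (u p.1 - u p.2) (deriv u p.2) (w p.1 - w p.2) +
            wedgeInner (deriv u p.2) (u p.1 - u p.2) (deriv w p.2) (u p.1 - u p.2)) -
        2 * (wedgeSq (deriv u p.2) (u p.1 - u p.2) ^ (q / 2) / ‖u p.1 - u p.2‖ ^ (2 * q + 2) *
          ⟪u p.1 - u p.2, w p.1 - w p.2⟫) := by
  unfold firstVarIntegrand Mintegrand Aintegrand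
  rw [← mul_add]
  congr 2
  unfold wedgeInner
  simp only [inner_sub_right (𝕜 := ℝ) _ _ (wrap (p.1 - p.2) • _), inner_smul_right]
  ring

lemma deriv_add_smul {u w : ℝ → EuclideanSpace ℝ (Fin n)} (hu : ContDiff ℝ 1 u)
    (hw : ContDiff ℝ 1 w) (t x : ℝ) :
    deriv (fun x => u x + t • w x) x = deriv u x + t • deriv w x :=
  ((hu.differentiable one_ne_zero x).hasDerivAt.add
    ((hw.differentiable one_ne_zero x).hasDerivAt.const_smul t)).deriv

lemma taylorRem_add_smul {u w : ℝ → EuclideanSpace ℝ (Fin n)} (hu : ContDiff ℝ 1 u)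
    (hw : ContDiff ℝ 1 w) (t : ℝ) (p : ℝ × ℝ) :
    taylorRem (fun x => u x + t • w x) p = taylorRem u p + t • taylorRem w p := by
  unfold taylorRem
  rw [deriv_add_smul hu hw]
  module

lemma hasDerivAt_tpIntegrand (hq : 2 < q) {u w : ℝ → EuclideanSpace ℝ (Fin n)}
    (hu : ContDiff ℝ 1 u) (hw : ContDiff ℝ 1 w) {p : ℝ × ℝ} {t : ℝ}
    (h : (u p.1 + t • w p.1) - (u p.2 + t • w p.2) ≠ 0 ∨ (u p.1 = u p.2 ∧ w p.1 = w p.2)) :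
    HasDerivAt (fun τ : ℝ => 1 / q * tpIntegrand q (fun x => u x + τ • w x) p)
      (firstVarIntegrand q (fun x => u x + t • w x) w p) t := by
  have hsplit : ∀ τ : ℝ, (u p.1 + τ • w p.1) - (u p.2 + τ • w p.2)
      = (u p.1 - u p.2) + τ • (w p.1 - w p.2) := fun τ => by module
  rw [firstVarIntegrand_eq]
  simp only [tpIntegrand, deriv_add_smul hu hw, hsplit] at h ⊢
  rcases h with h | ⟨h₁, h₂⟩
  · refine ((hasDerivAt_wedgeQuotient hq (deriv u p.2) (u p.1 - u p.2) (deriv w p.2)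
      (w p.1 - w p.2) h).const_mul (1 / q)).congr_deriv ?_
    rw [← mul_assoc, one_div_mul_cancel (by linarith), one_mul]
  · have hz : 2 * q ≠ 0 := by linarith
    have hz' : 2 * q + 2 ≠ 0 := by linarith
    simpa [h₁, h₂, Real.zero_rpow hz, Real.zero_rpow hz'] using hasDerivAt_const t (0 : ℝ)

end PointwiseDerivative

section Measurability

variable {n : ℕ}

lemma measurable_tpIntegrand (q : ℝ) {u : ℝ → EuclideanSpace ℝ (Fin n)} (hu : ContDiff ℝ 1 u) :
    Measurable (tpIntegrand q u) := by
  have h₁ := hu.continuous.measurable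
  have h₂ := (hu.continuous_deriv le_rfl).measurable
  unfold tpIntegrand wedgeSq
  fun_prop

lemma measurable_Mintegrand (q : ℝ) {u v w : ℝ → EuclideanSpace ℝ (Fin n)} (hu : ContDiff ℝ 1 u)
    (hv : ContDiff ℝ 1 v) (hw : ContDiff ℝ 1 w) : Measurable (Mintegrand q u v w) := by
  have h₁ := hu.continuous.measurable
  have h₂ := (hu.continuous_deriv le_rfl).measurable
  have h₃ := (hv.continuous_deriv le_rfl).measurable
  have h₄ := hw.continuous.measurable
  have h₅ := (hw.continuous_deriv le_rfl).measurable
  have h₆ := measurable_wrap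
  unfold Mintegrand wedgeSq wedgeInner
  fun_prop

lemma measurable_Aintegrand (q : ℝ) {u v w : ℝ → EuclideanSpace ℝ (Fin n)} (hu : ContDiff ℝ 1 u)
    (hv : ContDiff ℝ 1 v) (hw : ContDiff ℝ 1 w) : Measurable (Aintegrand q u v w) := by
  have h₁ := hu.continuous.measurable
  have h₂ := (hu.continuous_deriv le_rfl).measurable
  have h₃ := hv.continuous.measurable
  have h₄ := hw.continuous.measurable
  unfold Aintegrand wedgeSq
  fun_prop

end Measurability

section KernelIntegrability

variable {n : ℕ} {q : ℝ}

lemma integrableOn_taylorKernel (hq : 1 < q) {u : ℝ → EuclideanSpace ℝ (Fin n)}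
    (hu : ContDiff ℝ 1 u) (hup : u.Periodic 1) (hS : sobSemPow (1 - 1 / q) q (deriv u) < ⊤) :
    IntegrableOn (fun p : ℝ × ℝ => ‖taylorRem u p‖ ^ q / circDist p.1 p.2 ^ (2 * q)) unitSq := by
  have h₁ := measurable_taylorRem hu
  have h₂ := continuous_circDist.measurable
  refine ⟨Measurable.aestronglyMeasurable (by fun_prop), ?_⟩
  rw [hasFiniteIntegral_iff_ofReal (ae_of_all _ fun p => div_nonneg (by positivity)
    (Real.rpow_nonneg (circDist_nonneg _ _) _))]
  exact (lintegral_taylorRem_le hq hu hup).trans_lt hS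

lemma integral_taylorKernel_le (hq : 1 < q) {u : ℝ → EuclideanSpace ℝ (Fin n)}
    (hu : ContDiff ℝ 1 u) (hup : u.Periodic 1) (hS : sobSemPow (1 - 1 / q) q (deriv u) < ⊤) :
    ∫ p in unitSq, ‖taylorRem u p‖ ^ q / circDist p.1 p.2 ^ (2 * q) ≤
      (sobSemPow (1 - 1 / q) q (deriv u)).toReal := by
  rw [integral_eq_lintegral_of_nonneg_ae (ae_of_all _ fun p => div_nonneg (by positivity)
    (Real.rpow_nonneg (circDist_nonneg _ _) _))
    (integrableOn_taylorKernel hq hu hup hS).aestronglyMeasurable]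
  exact ENNReal.toReal_mono hS.ne (lintegral_taylorRem_le hq hu hup)

lemma rpow_sub_one_mul_div_eq (hq : 1 < q) {R S d : ℝ} (hR : 0 ≤ R) (hd : 0 ≤ d) :
    R ^ (q - 1) * S / d ^ (2 * q) = (R / d ^ 2) ^ (q - 1) * (S / d ^ 2) := by
  have hd2 : 0 ≤ d ^ 2 := by positivity
  have h : d ^ (2 * q) = (d ^ 2) ^ (q - 1) * d ^ 2 := by
    rw [← Real.rpow_add_one' hd2 (by linarith), sub_add_cancel, Real.rpow_mul hd]
    norm_cast
  rw [h, Real.div_rpow hR hd2]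
  ring

lemma rpow_div_rpow_eq {R d : ℝ} (hR : 0 ≤ R) (hd : 0 ≤ d) :
    R ^ q / d ^ (2 * q) = (R / d ^ 2) ^ q := by
  rw [Real.div_rpow hR (by positivity), Real.rpow_mul hd]
  norm_cast

lemma integrableOn_mixedKernel (hq : 1 < q) {u w : ℝ → EuclideanSpace ℝ (Fin n)}
    (hu : ContDiff ℝ 1 u) (hup : u.Periodic 1) (hS : sobSemPow (1 - 1 / q) q (deriv u) < ⊤)
    (hw : ContDiff ℝ 1 w) (hwp : w.Periodic 1) (hT : sobSemPow (1 - 1 / q) q (deriv w) < ⊤) :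
    IntegrableOn (fun p : ℝ × ℝ => ‖taylorRem u p‖ ^ (q - 1) * ‖taylorRem w p‖ /
        circDist p.1 p.2 ^ (2 * q)) unitSq ∧
    ∫ p in unitSq, ‖taylorRem u p‖ ^ (q - 1) * ‖taylorRem w p‖ / circDist p.1 p.2 ^ (2 * q) ≤
      ((sobSemPow (1 - 1 / q) q (deriv u)).toReal ^ (1 / q)) ^ (q - 1) *
        (sobSemPow (1 - 1 / q) q (deriv w)).toReal ^ (1 / q) := by
  have hq0 : 0 < q := by linarith
  have hq1 : 0 < q - 1 := by linarith
  have hmu := measurable_taylorRem hu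
  have hmw := measurable_taylorRem hw
  have hmd := continuous_circDist.measurable
  set μ := (volume : Measure (ℝ × ℝ)).restrict unitSq
  set f : ℝ × ℝ → ℝ := fun p => (‖taylorRem u p‖ / circDist p.1 p.2 ^ 2) ^ (q - 1) with hf
  set g : ℝ × ℝ → ℝ := fun p => ‖taylorRem w p‖ / circDist p.1 p.2 ^ 2 with hg
  have hf0 : ∀ p, 0 ≤ f p := fun p => by positivity
  have hg0 : ∀ p, 0 ≤ g p := fun p => by positivity
  have hconj := (Real.HolderConjugate.conjExponent hq).symm
  have hexp : 0 < Real.conjExponent q := hconj.pos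
  have hfpow : ∀ p, f p ^ Real.conjExponent q
      = ‖taylorRem u p‖ ^ q / circDist p.1 p.2 ^ (2 * q) := fun p => by
    rw [rpow_div_rpow_eq (norm_nonneg _) (circDist_nonneg _ _), hf, ← Real.rpow_mul (by positivity),
      Real.conjExponent, mul_div_cancel₀ _ hq1.ne']
  have hgpow : ∀ p, g p ^ q
      = ‖taylorRem w p‖ ^ q / circDist p.1 p.2 ^ (2 * q) := fun p => by
    rw [rpow_div_rpow_eq (norm_nonneg _) (circDist_nonneg _ _)]
  have hfL : MemLp f (ENNReal.ofReal (Real.conjExponent q)) μ := by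
    rw [← integrable_norm_rpow_iff (Measurable.aestronglyMeasurable (by fun_prop))
      (by simpa using hexp) ENNReal.ofReal_ne_top, ENNReal.toReal_ofReal hexp.le]
    simp only [Real.norm_of_nonneg (hf0 _), hfpow]
    exact integrableOn_taylorKernel hq hu hup hS
  have hgL : MemLp g (ENNReal.ofReal q) μ := by
    rw [← integrable_norm_rpow_iff (Measurable.aestronglyMeasurable (by fun_prop))
      (by simpa using hq0) ENNReal.ofReal_ne_top, ENNReal.toReal_ofReal hq0.le]
    simp only [Real.norm_of_nonneg (hg0 _), hgpow]
    exact integrableOn_taylorKernel hq hw hwp hT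
  have hprod : (fun p : ℝ × ℝ => ‖taylorRem u p‖ ^ (q - 1) * ‖taylorRem w p‖ /
      circDist p.1 p.2 ^ (2 * q)) = fun p => f p * g p := by
    ext p
    exact rpow_sub_one_mul_div_eq hq (norm_nonneg _) (circDist_nonneg _ _)
  rw [hprod]
  have : ENNReal.HolderConjugate (ENNReal.ofReal (Real.conjExponent q)) (ENNReal.ofReal q) :=
    hconj.ennrealOfReal
  refine ⟨hfL.integrable_mul hgL, ?_⟩
  refine (integral_mul_le_Lp_mul_Lq_of_nonneg hconj (ae_of_all _ hf0) (ae_of_all _ hg0)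
    hfL hgL).trans ?_
  simp only [hfpow, hgpow]
  have hnn : ∀ v : ℝ → EuclideanSpace ℝ (Fin n),
      0 ≤ ∫ p in unitSq, ‖taylorRem v p‖ ^ q / circDist p.1 p.2 ^ (2 * q) := fun v =>
    integral_nonneg fun p => div_nonneg (by positivity) (Real.rpow_nonneg (circDist_nonneg _ _) _)
  have he : 1 / Real.conjExponent q = 1 / q * (q - 1) := by
    rw [Real.conjExponent]; field_simp
  rw [← Real.rpow_mul ENNReal.toReal_nonneg, ← he]
  have hSu := integral_taylorKernel_le hq hu hup hS
  have hSw := integral_taylorKernel_le hq hw hwp hT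
  have h₁ := Real.rpow_le_rpow (hnn u) hSu (by positivity : 0 ≤ 1 / Real.conjExponent q)
  have h₂ := Real.rpow_le_rpow (hnn w) hSw (by positivity : 0 ≤ 1 / q)
  exact mul_le_mul h₁ h₂ (Real.rpow_nonneg (hnn w) _) (by positivity)

end KernelIntegrability

section FirstVariation

variable {n : ℕ} {q : ℝ}

lemma TPr_eq_integral (hq : 2 < q) {u : ℝ → EuclideanSpace ℝ (Fin n)} (hu : ContDiff ℝ 1 u) :
    TPr q u = ∫ p in unitSq, 1 / q * tpIntegrand q u p := by
  have hnn : ∀ p, 0 ≤ tpIntegrand q u p := fun p =>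
    div_nonneg (Real.rpow_nonneg (wedgeSq_nonneg _ _) _) (Real.rpow_nonneg (norm_nonneg _) _)
  rw [integral_const_mul, integral_eq_lintegral_of_nonneg_ae (ae_of_all _ hnn)
    (measurable_tpIntegrand q hu).aestronglyMeasurable]
  unfold TPr TPe
  rw [ENNReal.toReal_mul, ENNReal.toReal_ofReal (by positivity)]
  rfl

lemma add_rpow_le_two_rpow_mul (hq : 0 < q) {R S : ℝ} (hR : 0 ≤ R) (hS : 0 ≤ S) :
    (R + S) ^ q ≤ 2 ^ q * (R ^ q + S ^ q) := by
  have h₁ : R + S ≤ 2 * max R S := by linarith [le_max_left R S, le_max_right R S]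
  calc (R + S) ^ q ≤ (2 * max R S) ^ q := by gcongr
    _ = 2 ^ q * max R S ^ q := Real.mul_rpow zero_le_two (le_max_of_le_left hR)
    _ ≤ 2 ^ q * (R ^ q + S ^ q) := by
        gcongr
        have := Real.rpow_nonneg hR q
        have := Real.rpow_nonneg hS q
        rcases max_choice R S with h | h <;> rw [h] <;> linarith

lemma norm_tpIntegrand_le (hq : 2 < q) {u : ℝ → EuclideanSpace ℝ (Fin n)} {p : ℝ × ℝ}
    {B L : ℝ} (hB : 0 ≤ B) (hL : ‖deriv u p.2‖ ≤ L)
    (hd : circDist p.1 p.2 ≤ B * ‖u p.1 - u p.2‖)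
    (h0 : circDist p.1 p.2 = 0 → u p.1 = u p.2) :
    ‖tpIntegrand q u p‖ ≤
      L ^ q * B ^ (2 * q) * (‖taylorRem u p‖ ^ q / circDist p.1 p.2 ^ (2 * q)) := by
  have hL0 : 0 ≤ L := (norm_nonneg _).trans hL
  have hW := rpow_wedgeSq_le (deriv u p.2) (u p.1 - u p.2) (r := q) (by linarith)
    (wrap (p.1 - p.2))
  have hD := one_div_rpow_le (circDist_nonneg _ _) hB (norm_nonneg (u p.1 - u p.2)) hd
    (fun h => by rw [h0 h, sub_self, norm_zero]) (by linarith : 0 < 2 * q)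
  have hW0 := Real.rpow_nonneg (wedgeSq_nonneg (deriv u p.2) (u p.1 - u p.2)) (q / 2)
  unfold tpIntegrand
  rw [Real.norm_of_nonneg (div_nonneg hW0 (Real.rpow_nonneg (norm_nonneg _) _)),
    div_eq_mul_one_div]
  calc _ ≤ (L * ‖taylorRem u p‖) ^ q * (B ^ (2 * q) / circDist p.1 p.2 ^ (2 * q)) := by
        refine mul_le_mul (hW.trans ?_) hD (by positivity) (by positivity)
        exact Real.rpow_le_rpow (by positivity) (mul_le_mul_of_nonneg_right hL (norm_nonneg _))
          (by linarith)
    _ = _ := by rw [Real.mul_rpow hL0 (norm_nonneg _)]; ring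

lemma norm_firstVarIntegrand_le (hq : 2 < q) {u w : ℝ → EuclideanSpace ℝ (Fin n)} {p : ℝ × ℝ}
    {B L K G : ℝ} (hB : 0 ≤ B) (hL : ‖deriv u p.2‖ ≤ L) (hK : ‖deriv w p.2‖ ≤ K)
    (hu : ‖u p.1 - u p.2‖ ≤ L * circDist p.1 p.2) (hw : ‖w p.1 - w p.2‖ ≤ K * circDist p.1 p.2)
    (hd : circDist p.1 p.2 ≤ B * ‖u p.1 - u p.2‖)
    (hG : ‖taylorRem u p‖ ≤ G) (hG' : ‖taylorRem w p‖ ≤ G) :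
    ‖firstVarIntegrand q u w p‖ ≤
      (2 * B ^ (2 * q) * L ^ (q - 1) * L + 2 * B ^ (2 * q) * L ^ (q - 1) * K +
        2 * (B ^ (2 * q + 2) * L ^ (q + 1) * K)) * (G ^ q / circDist p.1 p.2 ^ (2 * q)) := by
  have hL0 : 0 ≤ L := (norm_nonneg _).trans hL
  have hK0 : 0 ≤ K := (norm_nonneg _).trans hK
  have hG0 : 0 ≤ G := (norm_nonneg _).trans hG
  have hd0 := circDist_nonneg p.1 p.2
  have h0 : circDist p.1 p.2 = 0 → u p.1 = u p.2 := fun h => by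
    rw [h, mul_zero] at hu
    exact sub_eq_zero.1 (norm_le_zero_iff.1 hu)
  have hpow : G ^ (q - 1) * G = G ^ q := by
    rw [← Real.rpow_add_one' hG0 (by linarith), sub_add_cancel]
  have hmono : ‖taylorRem u p‖ ^ (q - 1) ≤ G ^ (q - 1) :=
    Real.rpow_le_rpow (norm_nonneg _) hG (by linarith)
  have h₁ : ‖taylorRem u p‖ ^ (q - 1) * ‖taylorRem w p‖ ≤ G ^ q := by rw [← hpow]; gcongr
  have h₂ : ‖taylorRem u p‖ ^ (q - 1) * ‖taylorRem u p‖ ≤ G ^ q := by rw [← hpow]; gcongr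
  have h₃ : ‖taylorRem u p‖ ^ q ≤ G ^ q := Real.rpow_le_rpow (norm_nonneg _) hG (by linarith)
  have hM₁ := (abs_Mintegrand_le hq (v := u) (w := w) hB hL hL hd h0).trans
    (mul_le_mul_of_nonneg_left (div_le_div_of_nonneg_right h₁ (Real.rpow_nonneg hd0 (2 * q)))
      (by positivity))
  have hM₂ := (abs_Mintegrand_le hq (v := w) (w := u) hB hL hK hd h0).trans
    (mul_le_mul_of_nonneg_left (div_le_div_of_nonneg_right h₂ (Real.rpow_nonneg hd0 (2 * q)))
      (by positivity))
  have hA := (abs_Aintegrand_le hq hB hL hu hw hd).trans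
    (mul_le_mul_of_nonneg_left (div_le_div_of_nonneg_right h₃ (Real.rpow_nonneg hd0 (2 * q)))
      (by positivity))
  unfold firstVarIntegrand
  rw [Real.norm_eq_abs]
  refine (abs_sub _ _).trans ((add_le_add_left (abs_add_le _ _) _).trans ?_)
  rw [abs_mul, abs_two]
  linarith

lemma hasDerivAt_TPr (hq : 2 < q) {u w : ℝ → EuclideanSpace ℝ (Fin n)}
    (hu : ContDiff ℝ 1 u) (hup : u.Periodic 1) (hS : sobSemPow (1 - 1 / q) q (deriv u) < ⊤)
    (hw : ContDiff ℝ 1 w) (hwp : w.Periodic 1) (hT : sobSemPow (1 - 1 / q) q (deriv w) < ⊤)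
    {B L K : ℝ} (hB0 : 0 ≤ B) (hB : ∀ x y, circDist x y ≤ B * ‖u x - u y‖)
    (hL : ∀ x, ‖deriv u x‖ ≤ L) (hK : ∀ x, ‖deriv w x‖ ≤ K) :
    HasDerivAt (fun t : ℝ => TPr q (fun x => u x + t • w x))
      (∫ p in unitSq, firstVarIntegrand q u w p) 0 := by
  have hq0 : 0 < q := by linarith
  have hL0 : 0 ≤ L := (norm_nonneg _).trans (hL 0)
  have hK0 : 0 ≤ K := (norm_nonneg _).trans (hK 0)
  have hcd : ∀ t : ℝ, ContDiff ℝ 1 (fun x => u x + t • w x) := fun t =>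
    hu.add (hw.const_smul t)
  have hper : ∀ t : ℝ, Function.Periodic (fun x => u x + t • w x) 1 := fun t x => by
    simp only [hup x, hwp x]
  set ε : ℝ := 1 / (1 + 2 * (B * K)) with hε
  have hBK : 0 ≤ B * K := by positivity
  have hε0 : 0 < ε := by positivity
  have hε1 : ε ≤ 1 := by rw [hε, div_le_one (by positivity)]; linarith
  have hε2 : ε * (B * K) ≤ 1 / 2 := by
    rw [hε, div_mul_eq_mul_div, div_le_div_iff₀ (by positivity) two_pos]; linarith
  have hbil : ∀ t ∈ Metric.ball (0 : ℝ) ε, ∀ x y,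
      circDist x y ≤ (2 * B) * ‖(u x + t • w x) - (u y + t • w y)‖ := by
    intro t ht x y
    have ht' : |t| ≤ ε := by simpa using (Metric.mem_ball.1 ht).le
    have hd0 := circDist_nonneg x y
    have e : u x - u y = ((u x + t • w x) - (u y + t • w y)) - t • (w x - w y) := by module
    have h₁ := norm_sub_le ((u x + t • w x) - (u y + t • w y)) (t • (w x - w y))
    rw [← e, norm_smul, Real.norm_eq_abs] at h₁
    have h₂ : |t| * ‖w x - w y‖ ≤ ε * (K * circDist x y) := by
      gcongr; exact norm_sub_le_mul_circDist hw hwp hK x y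
    have h₃ := mul_le_mul_of_nonneg_left (h₁.trans (add_le_add_right h₂ _)) hB0
    have h₄ := mul_le_mul_of_nonneg_right hε2 hd0
    have h₅ := hB x y
    nlinarith
  have hderiv : ∀ t ∈ Metric.ball (0 : ℝ) ε, ∀ x, ‖deriv (fun x => u x + t • w x) x‖ ≤ L + K := by
    intro t ht x
    have ht' : |t| ≤ 1 := (by simpa using (Metric.mem_ball.1 ht).le : |t| ≤ ε).trans hε1
    rw [deriv_add_smul hu hw]
    refine (norm_add_le _ _).trans (add_le_add (hL x) ?_)
    rw [norm_smul, Real.norm_eq_abs]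
    exact (mul_le_of_le_one_left (norm_nonneg _) ht').trans (hK x)
  set Λ : ℝ := 2 * (2 * B) ^ (2 * q) * (L + K) ^ (q - 1) * (L + K) +
    2 * (2 * B) ^ (2 * q) * (L + K) ^ (q - 1) * K +
      2 * ((2 * B) ^ (2 * q + 2) * (L + K) ^ (q + 1) * K) with hΛ
  have hΛ0 : 0 ≤ Λ := by positivity
  set bound : ℝ × ℝ → ℝ := fun p => Λ * (2 ^ q * (‖taylorRem u p‖ ^ q / circDist p.1 p.2 ^ (2 * q) +
    ‖taylorRem w p‖ ^ q / circDist p.1 p.2 ^ (2 * q))) with hbound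
  have hbi : Integrable bound (volume.restrict unitSq) :=
    (((integrableOn_taylorKernel (by linarith) hu hup hS).add
      (integrableOn_taylorKernel (by linarith) hw hwp hT)).const_mul _).const_mul _
  have hfun : (fun t : ℝ => TPr q (fun x => u x + t • w x))
      = fun t => ∫ p in unitSq, 1 / q * tpIntegrand q (fun x => u x + t • w x) p := by
    ext t; exact TPr_eq_integral hq (hcd t)
  have hzero : (fun x => u x + (0 : ℝ) • w x) = u := by ext x; simp
  have key := hasDerivAt_integral_of_dominated_loc_of_deriv_le
    (μ := volume.restrict unitSq) (bound := bound) (x₀ := (0 : ℝ)) (s := Metric.ball (0 : ℝ) ε)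
    (F := fun t p => 1 / q * tpIntegrand q (fun x => u x + t • w x) p)
    (F' := fun t p => firstVarIntegrand q (fun x => u x + t • w x) w p)
    (Metric.ball_mem_nhds _ hε0)
    (Eventually.of_forall fun t =>
      ((measurable_tpIntegrand q (hcd t)).const_mul _).aestronglyMeasurable)
    ?_ ?_ ?_ hbi ?_
  · rw [hfun]
    simpa only [hzero] using key.2
  · simp only [hzero]
    refine Integrable.const_mul ?_ _
    refine Integrable.mono'
      ((integrableOn_taylorKernel (by linarith) hu hup hS).const_mul (L ^ q * B ^ (2 * q)))
      (measurable_tpIntegrand q hu).aestronglyMeasurable (ae_of_all _ fun p => ?_)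
    exact norm_tpIntegrand_le hq hB0 (hL _) (hB _ _) hup.eq_of_circDist_eq_zero
  · simp only [hzero]
    exact (((measurable_Mintegrand q hu hu hw).add (measurable_Mintegrand q hu hw hu)).sub
      ((measurable_Aintegrand q hu hu hw).const_mul 2)).aestronglyMeasurable
  · refine ae_of_all _ fun p t ht => ?_
    have ht' : |t| ≤ 1 := (by simpa using (Metric.mem_ball.1 ht).le : |t| ≤ ε).trans hε1
    have hG : ‖taylorRem (fun x => u x + t • w x) p‖ ≤ ‖taylorRem u p‖ + ‖taylorRem w p‖ := by
      rw [taylorRem_add_smul hu hw]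
      refine (norm_add_le _ _).trans (add_le_add_right ?_ _)
      rw [norm_smul, Real.norm_eq_abs]
      exact mul_le_of_le_one_left (norm_nonneg _) ht'
    refine (norm_firstVarIntegrand_le hq (by positivity : 0 ≤ 2 * B) (hderiv t ht _) (hK _)
      (norm_sub_le_mul_circDist (hcd t) (hper t) (hderiv t ht) _ _)
      (norm_sub_le_mul_circDist hw hwp hK _ _) (hbil t ht _ _) hG
      (le_add_of_nonneg_left (norm_nonneg _))).trans ?_
    rw [← hΛ, hbound]
    beta_reduce
    refine mul_le_mul_of_nonneg_left ?_ hΛ0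
    rw [← add_div, ← mul_div_assoc]
    exact div_le_div_of_nonneg_right
      (add_rpow_le_two_rpow_mul hq0 (norm_nonneg _) (norm_nonneg _))
      (Real.rpow_nonneg (circDist_nonneg _ _) _)
  · refine ae_of_all _ fun p t ht => hasDerivAt_tpIntegrand hq hu hw ?_
    by_cases h0 : circDist p.1 p.2 = 0
    · exact Or.inr ⟨hup.eq_of_circDist_eq_zero h0, hwp.eq_of_circDist_eq_zero h0⟩
    · left
      intro h
      have := hbil t ht p.1 p.2
      rw [h, norm_zero, mul_zero] at this
      exact h0 (le_antisymm this (circDist_nonneg _ _))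

lemma integrableOn_and_abs_integral_le {f k : ℝ × ℝ → ℝ} {c I : ℝ} (hf : Measurable f)
    (hk : IntegrableOn k unitSq) (hI : ∫ p in unitSq, k p ≤ I) (hc : 0 ≤ c)
    (h : ∀ p, |f p| ≤ c * k p) :
    IntegrableOn f unitSq ∧ |∫ p in unitSq, f p| ≤ c * I := by
  refine ⟨Integrable.mono' (hk.const_mul c) hf.aestronglyMeasurable (ae_of_all _ h), ?_⟩
  refine (norm_integral_le_of_norm_le (f := f) (hk.const_mul c) (ae_of_all _ h)).trans ?_
  rw [integral_const_mul]
  gcongr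

lemma one_le_mul_Lq_norm (hq : 1 < q) {f : ℝ → EuclideanSpace ℝ (Fin n)} (hf : Continuous f)
    {B : ℝ} (hB : 0 ≤ B) (h : ∀ x, 1 ≤ B * ‖f x‖) :
    1 ≤ B * (∫ x in Ioc (0 : ℝ) 1, ‖f x‖ ^ q) ^ (1 / q) := by
  have hq0 : 0 < q := by linarith
  have hB0 : 0 < B := hB.lt_of_ne (by rintro rfl; linarith [h 0])
  have hi : IntegrableOn (fun x => ‖f x‖ ^ q) (Ioc (0 : ℝ) 1) :=
    ((hf.norm.rpow_const fun _ => Or.inr hq0.le).integrableOn_Icc).mono_set Ioc_subset_Icc_self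
  have hle : (1 / B) ^ q ≤ ∫ x in Ioc (0 : ℝ) 1, ‖f x‖ ^ q := by
    have := setIntegral_mono_on (f := fun _ => (1 / B) ^ q) (by simp) hi measurableSet_Ioc
      (fun x _ => Real.rpow_le_rpow (by positivity)
        (by rw [div_le_iff₀ hB0, mul_comm]; exact h x) hq0.le)
    simpa using this
  have hroot : 1 / B ≤ (∫ x in Ioc (0 : ℝ) 1, ‖f x‖ ^ q) ^ (1 / q) := by
    rw [one_div q, Real.le_rpow_inv_iff_of_pos (by positivity) (integral_norm_rpow_nonneg f q) hq0]
    exact hle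
  rwa [div_le_iff₀ hB0, mul_comm] at hroot

end FirstVariation

/-- Proposition 3.9, first variation: `t ↦ TP(u + t w)` is
differentiable at `t = 0` with derivative `δTP(u)[w] = M(u;u,w) + M(u;w,u) - 2A(u;u,w)`,
and `|δTP(u)[w]| ≤ C (bil u)^{2q+2} ‖u'‖_{L^∞}^{q+1} ‖u'‖_{W^{1-1/q,q}}^q ‖w'‖_{W^{1-1/q,q}}`
with `C = C(n, q)`. -/
theorem first_variation_estimate (n : ℕ) (q : ℝ) (hq : 2 < q) :
    ∃ C : ℝ, 0 < C ∧ ∀ u w : ℝ → EuclideanSpace ℝ (Fin n),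
      ContDiff ℝ 1 u → Function.Periodic u 1 → Embedded u → Regular u →
      bil u < ⊤ → sobSemPow (1 - 1 / q) q (deriv u) < ⊤ →
      ContDiff ℝ 1 w → Function.Periodic w 1 →
      sobSemPow (1 - 1 / q) q (deriv w) < ⊤ →
      HasDerivAt (fun t : ℝ => TPr q (fun x => u x + t • w x)) (deltaTP q u w) 0 ∧
      |deltaTP q u w| ≤
        C * (bil u).toReal ^ (2 * q + 2) * (linfD u).toReal ^ (q + 1) *
          Wnorm (1 - 1 / q) q (deriv u) ^ q * Wnorm (1 - 1 / q) q (deriv w) := by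
  obtain ⟨C₀, hC₀, hemb⟩ := exists_norm_le_Wnorm n hq
  refine ⟨2 + 4 * C₀, by positivity, fun u w hu hup _ _ hb hS hw hwp hT => ?_⟩
  have hq0 : 0 < q := by linarith
  have hq1 : 1 < q := by linarith
  set B := (bil u).toReal
  set L := (linfD u).toReal
  set N := (∫ x in Ioc (0 : ℝ) 1, ‖deriv u x‖ ^ q) ^ (1 / q)
  set σ := (sobSemPow (1 - 1 / q) q (deriv u)).toReal ^ (1 / q) with hσ
  set τ := (sobSemPow (1 - 1 / q) q (deriv w)).toReal ^ (1 / q)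
  set U := Wnorm (1 - 1 / q) q (deriv u)
  set V := Wnorm (1 - 1 / q) q (deriv w)
  have hB0 : 0 ≤ B := ENNReal.toReal_nonneg
  have hL0 : 0 ≤ L := ENNReal.toReal_nonneg
  have hσ0 : 0 ≤ σ := by positivity
  have hτ0 : 0 ≤ τ := by positivity
  have hN0 : 0 ≤ N := Real.rpow_nonneg (integral_norm_rpow_nonneg _ _) _
  have hUeq : U = N + σ := rfl
  have hτV : τ ≤ V := le_add_of_nonneg_left (Real.rpow_nonneg (integral_norm_rpow_nonneg _ _) _)
  have hV0 : 0 ≤ V := hτ0.trans hτV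
  have hσU : σ ≤ U := by linarith
  have hU0 : 0 ≤ U := by linarith
  have hB : ∀ x y, circDist x y ≤ B * ‖u x - u y‖ := circDist_le_bil_mul hb
  have hL : ∀ x, ‖deriv u x‖ ≤ L := norm_deriv_le_linfD hu hup
  have hK : ∀ x, ‖deriv w x‖ ≤ C₀ * V :=
    hemb _ (hw.continuous_deriv le_rfl) hwp.deriv_one hT
  have hK0 : 0 ≤ C₀ * V := by positivity
  have hBu := one_le_mul_norm_deriv hu hB
  have hBL : 1 ≤ B * L := (hBu 0).trans (by gcongr; exact hL 0)
  have hBU : 1 ≤ B * U :=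
    (one_le_mul_Lq_norm hq1 (hu.continuous_deriv le_rfl) hB0 hBu).trans (by gcongr; linarith)
  have hkernel := integrableOn_taylorKernel hq1 hu hup hS
  have hσq : σ ^ q = (sobSemPow (1 - 1 / q) q (deriv u)).toReal := by
    rw [hσ, one_div, Real.rpow_inv_rpow ENNReal.toReal_nonneg hq0.ne']
  have hkle := integral_taylorKernel_le hq1 hu hup hS
  rw [← hσq] at hkle
  obtain ⟨hmi, hmle⟩ := integrableOn_mixedKernel hq1 hu hup hS hw hwp hT
  have hpow : ∀ x : ℝ, 0 ≤ x → x ^ (q - 1) * x = x ^ q := fun x hx => by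
    rw [← Real.rpow_add_one' hx (by linarith), sub_add_cancel]
  have hlip := norm_sub_le_mul_circDist hu hup hL
  have hlipw := norm_sub_le_mul_circDist hw hwp hK
  obtain ⟨hi₁, hb₁⟩ := integrableOn_and_abs_integral_le (measurable_Mintegrand q hu hu hw) hmi hmle
    (by positivity) (fun p => abs_Mintegrand_le hq hB0 (hL _) (hL _) (hB _ _)
      hup.eq_of_circDist_eq_zero)
  obtain ⟨hi₂, hb₂⟩ := integrableOn_and_abs_integral_le (measurable_Mintegrand q hu hw hu)
    hkernel hkle (c := 2 * B ^ (2 * q) * L ^ (q - 1) * (C₀ * V)) (by positivity) (fun p => by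
      have h := abs_Mintegrand_le hq (v := w) (w := u) hB0 (hL _) (hK _) (hB _ _)
        hup.eq_of_circDist_eq_zero (p := p)
      rwa [hpow _ (norm_nonneg _)] at h)
  obtain ⟨hi₃, hb₃⟩ := integrableOn_and_abs_integral_le (measurable_Aintegrand q hu hu hw)
    hkernel hkle (by positivity) (fun p =>
      abs_Aintegrand_le hq hB0 (hL _) (hlip _ _) (hlipw _ _) (hB _ _))
  have hδ : deltaTP q u w = ∫ p in unitSq, firstVarIntegrand q u w p := by
    unfold firstVarIntegrand deltaTP Mfun Afun
    have h₁₂ : Integrable (fun p => Mintegrand q u u w p + Mintegrand q u w u p)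
      (volume.restrict unitSq) := hi₁.add hi₂
    rw [integral_sub h₁₂ (hi₃.const_mul 2), integral_add hi₁ hi₂, integral_const_mul]
  refine ⟨hδ ▸ hasDerivAt_TPr hq hu hup hS hw hwp hT hB0 hB hL hK, ?_⟩
  have hB2 : B ^ (2 * q + 2) = B ^ (2 * q) * B ^ 2 := by
    rw [Real.rpow_add_of_nonneg hB0 (by positivity) (by positivity)]; norm_cast
  have hL2 : L ^ (q + 1) = L ^ (q - 1) * L ^ 2 := by
    rw [show q + 1 = q - 1 + 2 by ring, Real.rpow_add_of_nonneg hL0 (by linarith) (by positivity)]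
    norm_cast
  have hσUq : σ ^ q ≤ U ^ q := Real.rpow_le_rpow hσ0 hσU hq0.le
  have hσUq1 : σ ^ (q - 1) ≤ U ^ (q - 1) := Real.rpow_le_rpow hσ0 hσU (by linarith)
  set Q := B ^ (2 * q + 2) * L ^ (q + 1) * U ^ q * V with hQ
  have e₁ : |Mfun q u u w| ≤ 2 * Q := by
    calc |Mfun q u u w| ≤ 2 * B ^ (2 * q) * L ^ (q - 1) * L * (σ ^ (q - 1) * τ) := hb₁
      _ ≤ 2 * B ^ (2 * q) * L ^ (q - 1) * L * (U ^ (q - 1) * V) := by gcongr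
      _ ≤ 2 * B ^ (2 * q) * L ^ (q - 1) * L * (U ^ (q - 1) * V) * ((B * L) * (B * U)) :=
        le_mul_of_one_le_right (by positivity) (one_le_mul_of_one_le_of_one_le hBL hBU)
      _ = 2 * Q := by rw [hQ, hB2, hL2, ← hpow U hU0]; ring
  have e₂ : |Mfun q u w u| ≤ 2 * C₀ * Q := by
    calc |Mfun q u w u| ≤ 2 * B ^ (2 * q) * L ^ (q - 1) * (C₀ * V) * σ ^ q := hb₂
      _ ≤ 2 * B ^ (2 * q) * L ^ (q - 1) * (C₀ * V) * U ^ q := by gcongr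
      _ ≤ 2 * B ^ (2 * q) * L ^ (q - 1) * (C₀ * V) * U ^ q * ((B * L) * (B * L)) :=
        le_mul_of_one_le_right (by positivity) (one_le_mul_of_one_le_of_one_le hBL hBL)
      _ = 2 * C₀ * Q := by rw [hQ, hB2, hL2]; ring
  have e₃ : |Afun q u u w| ≤ C₀ * Q := by
    calc |Afun q u u w| ≤ B ^ (2 * q + 2) * L ^ (q + 1) * (C₀ * V) * σ ^ q := hb₃
      _ ≤ B ^ (2 * q + 2) * L ^ (q + 1) * (C₀ * V) * U ^ q := by gcongr
      _ = C₀ * Q := by rw [hQ]; ring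
  calc |deltaTP q u w| ≤ |Mfun q u u w| + |Mfun q u w u| + 2 * |Afun q u u w| := by
        unfold deltaTP
        refine (abs_sub _ _).trans ?_
        rw [abs_mul, abs_two]
        gcongr
        exact abs_add_le _ _
    _ ≤ 2 * Q + 2 * C₀ * Q + 2 * (C₀ * Q) := by gcongr
    _ = _ := by rw [hQ]; ring
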